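/- arXiv:1911.05555 — 7 statements merged into one kernel-verified Lean document; each statement's English description precedes it below -/
import Mathlib

section
/- For any K, k ∈ T^d, a number z ∈ ℂ \ [E_min(K,k), E_max(K,k)] is an eigenvalue of the operator h(K,k) if and only if Δ_K(k; z) = 0. -/
open MeasureTheory Complex Filter Topology Set

noncomputable section

instance fact2pi : Fact (0 < 2 * Real.pi) := ⟨by positivity⟩

/-- The d-dimensional torus `(-π, π]^d` with its Haar (Lebesgue) measure. -/
abbrev Td (d : ℕ) : Type := Fin d → AddCircle (2 * Real.pi)

/-- The Hilbert space `L²(T^d)`. -/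
abbrev L2 (d : ℕ) := Lp ℂ 2 (volume : Measure (Td d))

/-- The Hilbert space `L²((T^d)²)`. -/
abbrev L2two (d : ℕ) := Lp ℂ 2 (volume : Measure (Td d × Td d))

/-- The Hilbert space `ℂ ⊕ L²(T^d)`. -/
abbrev Hkk (d : ℕ) := WithLp 2 (ℂ × L2 d)

/-- The zero-particle component of an element of `ℂ ⊕ L²(T^d)`. -/
def pk1 {d : ℕ} (f : Hkk d) : ℂ := (WithLp.equiv 2 (ℂ × L2 d) f).1

/-- The one-particle component of an element of `ℂ ⊕ L²(T^d)`. -/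
def pk2 {d : ℕ} (f : Hkk d) : L2 d := (WithLp.equiv 2 (ℂ × L2 d) f).2

variable {d : ℕ}

/-- `E_min(K,k) = min_q w₂(K; k, q)`. -/
def Emin (w₂ : Td d → Td d → Td d → ℝ) (K k : Td d) : ℝ := ⨅ q, w₂ K k q

/-- `E_max(K,k) = max_q w₂(K; k, q)`. -/
def Emax (w₂ : Td d → Td d → Td d → ℝ) (K k : Td d) : ℝ := ⨆ q, w₂ K k q

/-- `m_K = min_{p,q} w₂(K; p, q)`. -/
def mK (w₂ : Td d → Td d → Td d → ℝ) (K : Td d) : ℝ := ⨅ x : Td d × Td d, w₂ K x.1 x.2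

/-- `M_K = max_{p,q} w₂(K; p, q)`. -/
def MK (w₂ : Td d → Td d → Td d → ℝ) (K : Td d) : ℝ := ⨆ x : Td d × Td d, w₂ K x.1 x.2

/-- The Fredholm determinant
`Δ_K(k; z) = w₁(K,k) − z − (1/2) ∫ v₁(t)² / (w₂(K;k,t) − z) dt`. -/
def Delta (v₁ : Td d → ℝ) (w₁ : Td d → Td d → ℝ) (w₂ : Td d → Td d → Td d → ℝ)
    (K k : Td d) (z : ℂ) : ℂ :=
  (w₁ K k : ℂ) - z - (1 / 2) * ∫ t, (v₁ t : ℂ) ^ 2 / ((w₂ K k t : ℂ) - z)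

/-- The interval `[E_min(K,k), E_max(K,k)]`, viewed inside `ℂ`. -/
def bandKk (w₂ : Td d → Td d → Td d → ℝ) (K k : Td d) : Set ℂ :=
  Complex.ofReal '' Set.Icc (Emin w₂ K k) (Emax w₂ K k)

/-- The interval `[m_K, M_K]`, viewed inside `ℂ`. -/
def bigBand (w₂ : Td d → Td d → Td d → ℝ) (K : Td d) : Set ℂ :=
  Complex.ofReal '' Set.Icc (mK w₂ K) (MK w₂ K)

/-- The two-particle branch
`Λ_K = {z : ∃ k, z ∉ [E_min(K,k), E_max(K,k)] ∧ Δ_K(k; z) = 0}`. -/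
def LamK (v₁ : Td d → ℝ) (w₁ : Td d → Td d → ℝ) (w₂ : Td d → Td d → Td d → ℝ)
    (K : Td d) : Set ℂ :=
  {z | ∃ k, z ∉ bandKk w₂ K k ∧ Delta v₁ w₁ w₂ K k z = 0}

/-- `Σ_K = [m_K, M_K] ∪ Λ_K`. -/
def SigK (v₁ : Td d → ℝ) (w₁ : Td d → Td d → ℝ) (w₂ : Td d → Td d → Td d → ℝ)
    (K : Td d) : Set ℂ :=
  bigBand w₂ K ∪ LamK v₁ w₁ w₂ K

/-- The defining equations of the generalized Friedrichs model `h(K, k)` acting on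
`ℂ ⊕ L²(T^d)`:
`(h f)₀ = w₁(K,k) f₀ + (1/√2) ∫ v₁(s) f₁(s) ds` and
`(h f)₁(q) = (1/√2) v₁(q) f₀ + w₂(K; k, q) f₁(q)` (the first off-diagonal entry is `h₀₁` and
the second is its adjoint `h₀₁*`). -/
def IsGenFriedrichs {d : ℕ} (v₁ : Td d → ℝ) (w₁ : Td d → Td d → ℝ)
    (w₂ : Td d → Td d → Td d → ℝ) (K k : Td d) (h : Hkk d →L[ℂ] Hkk d) : Prop :=
  ∀ f : Hkk d,
    (pk1 (h f) = (w₁ K k : ℂ) * pk1 f +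
        (Real.sqrt 2 : ℂ)⁻¹ * (∫ s, (v₁ s : ℂ) * (pk2 f) s)) ∧
    (⇑(pk2 (h f)) =ᵐ[volume] fun q =>
        (Real.sqrt 2 : ℂ)⁻¹ * (v₁ q : ℂ) * pk1 f + (w₂ K k q : ℂ) * (pk2 f) q)

/-- For any `K, k ∈ T^d`, a number `z ∈ ℂ \ [E_min(K,k), E_max(K,k)]` is an
eigenvalue of `h(K,k)` if and only if `Δ_K(k; z) = 0`. -/
theorem eigenvalue_iff_Delta_eq_zero
    (d : ℕ) (hd : 1 ≤ d)
    (w₀ v₀ v₁ : Td d → ℝ) (w₁ : Td d → Td d → ℝ) (w₂ : Td d → Td d → Td d → ℝ)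
    (hw₀ : Continuous w₀) (hv₀ : Continuous v₀) (hv₁ : Continuous v₁)
    (hw₁ : Continuous fun x : Td d × Td d => w₁ x.1 x.2)
    (hw₂ : Continuous fun x : Td d × Td d × Td d => w₂ x.1 x.2.1 x.2.2)
    (hsym : ∀ K p q : Td d, w₂ K p q = w₂ K q p)
    (K k : Td d) (h : Hkk d →L[ℂ] Hkk d)
    (hh : IsGenFriedrichs v₁ w₁ w₂ K k h)
    (z : ℂ) (hz : z ∉ bandKk w₂ K k) :
    (∃ f : Hkk d, f ≠ 0 ∧ h f = z • f) ↔ Delta v₁ w₁ w₂ K k z = 0 := by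
  have hwc : Continuous fun q => w₂ K k q :=
    hw₂.comp (f := fun q : Td d => ((K, k, q) : Td d × Td d × Td d)) (by fun_prop)
  have hne : ∀ t, (w₂ K k t : ℂ) - z ≠ 0 := by
    intro t ht
    apply hz
    refine ⟨w₂ K k t, ⟨?_, ?_⟩, sub_eq_zero.mp ht⟩
    · exact ciInf_le (isCompact_range hwc).bddBelow t
    · exact le_ciSup (isCompact_range hwc).bddAbove t
  have hc : (Real.sqrt 2 : ℂ)⁻¹ * (Real.sqrt 2 : ℂ)⁻¹ = 1 / 2 := by
    rw [← mul_inv, ← Complex.ofReal_mul, Real.mul_self_sqrt (by norm_num)]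
    norm_num
  unfold Delta
  obtain ⟨c, hcd⟩ : ∃ c : ℂ, c = (Real.sqrt 2 : ℂ)⁻¹ := ⟨_, rfl⟩
  rw [← hcd] at hc
  have hh' : ∀ f : Hkk d,
    (pk1 (h f) = (w₁ K k : ℂ) * pk1 f + c * (∫ s, (v₁ s : ℂ) * (pk2 f) s)) ∧
    (⇑(pk2 (h f)) =ᵐ[volume] fun q =>
        c * (v₁ q : ℂ) * pk1 f + (w₂ K k q : ℂ) * (pk2 f) q) := by
    rw [hcd]
    exact hh
  have key : ∀ (f : Hkk d) (a : ℂ),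
      (⇑(pk2 f) =ᵐ[volume] fun q => -(c * a) * ((v₁ q : ℂ) / ((w₂ K k q : ℂ) - z))) →
      (∫ s, (v₁ s : ℂ) * (pk2 f) s) =
        -(c * a) * ∫ t, (v₁ t : ℂ) ^ 2 / ((w₂ K k t : ℂ) - z) := by
    intro f a hf
    rw [← integral_const_mul]
    apply integral_congr_ae
    filter_upwards [hf] with t ht
    rw [ht]
    ring
  constructor
  · rintro ⟨f, hf0, hf⟩
    obtain ⟨h1, h2⟩ := hh' f
    rw [hf] at h1 h2
    have e1 : pk1 (z • f) = z * pk1 f := rfl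
    have e2 : pk2 (z • f) = z • pk2 f := rfl
    rw [e1] at h1
    rw [e2] at h2
    have h3 : ⇑(pk2 f) =ᵐ[volume]
        fun q => -(c * pk1 f) * ((v₁ q : ℂ) / ((w₂ K k q : ℂ) - z)) := by
      filter_upwards [h2, Lp.coeFn_smul z (pk2 f)] with t ht ht'
      rw [ht'] at ht
      simp only [Pi.smul_apply, smul_eq_mul] at ht
      rw [← mul_div_assoc, eq_div_iff (hne t)]
      linear_combination -ht
    rw [key f _ h3] at h1
    have ha : pk1 f ≠ 0 := by
      intro ha
      apply hf0
      have hg : pk2 f = 0 := by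
        apply Lp.ext
        filter_upwards [h3, Lp.coeFn_zero ℂ 2 (volume : Measure (Td d))] with t ht ht'
        rw [ht, ht', ha]
        simp
      apply (WithLp.equiv 2 (ℂ × L2 d)).injective
      exact Prod.ext ha hg
    apply mul_left_cancel₀ ha
    rw [← hc]
    linear_combination -h1
  · intro hD
    have hgc : Continuous fun q : Td d => -(c * 1) * ((v₁ q : ℂ) / ((w₂ K k q : ℂ) - z)) := by
      refine continuous_const.mul (Continuous.div ?_ ?_ hne) <;> fun_prop
    have hm : MemLp (fun q : Td d => -(c * 1) * ((v₁ q : ℂ) / ((w₂ K k q : ℂ) - z))) 2 volume :=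
      hgc.memLp_of_hasCompactSupport (HasCompactSupport.of_compactSpace _)
    obtain ⟨f, hf1, hf2⟩ : ∃ f : Hkk d, pk1 f = 1 ∧ pk2 f = hm.toLp :=
      ⟨(WithLp.equiv 2 (ℂ × L2 d)).symm (1, hm.toLp), rfl, rfl⟩
    have h3 := hm.coeFn_toLp
    rw [← hf2] at h3
    obtain ⟨h1, h2⟩ := hh' f
    refine ⟨f, ?_, ?_⟩
    · rintro rfl
      have : (0 : ℂ) = 1 := hf1
      exact zero_ne_one this
    · apply (WithLp.equiv 2 (ℂ × L2 d)).injective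
      refine Prod.ext ?_ ?_
      · change pk1 (h f) = z * pk1 f
        rw [h1, key f 1 h3, hf1]
        rw [← hc] at hD
        linear_combination hD
      · change pk2 (h f) = z • pk2 f
        apply Lp.ext
        filter_upwards [h2, h3, Lp.coeFn_smul z (pk2 f)] with t ht ht3 ht'
        rw [ht, ht', Pi.smul_apply, smul_eq_mul, ht3, hf1]
        have := hne t
        field_simp
        ring
end
end

section
/- For every K ∈ T^d, the union over k ∈ T^d of the spectra of the generalized Friedrichs models equals Σ_K: ∪_{k ∈ T^d} σ(h(K,k)) = Σ_K = [m_K, M_K] ∪ Λ_K. -/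
open MeasureTheory Complex Filter Topology Set

noncomputable section

variable {d : ℕ}

theorem aux_noAtom (d : ℕ) (hd : 1 ≤ d) (q : Td d) : (volume : Measure (Td d)) {q} = 0 := by
  have h1 : ∀ x : AddCircle (2 * Real.pi),
      (volume : Measure (AddCircle (2 * Real.pi))) {x} = 0 := by
    intro x
    have h := AddCircle.volume_closedBall (T := 2 * Real.pi) (x := x) 0
    simp only [Metric.closedBall_zero, mul_zero] at h
    rw [h]
    simp [Real.pi_pos.le]
  have : ({q} : Set (Td d)) = Set.pi Set.univ fun i => {q i} := by
    ext x; simp [funext_iff]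
  rw [this, volume_pi_pi]
  exact Finset.prod_eq_zero (Finset.mem_univ ⟨0, hd⟩) (h1 _)

theorem aux_bdd {c : Td d → ℂ} (hc : Continuous c) : ∃ C : ℝ, ∀ x, ‖c x‖ ≤ C := by
  obtain ⟨C, hC⟩ := isCompact_univ.exists_bound_of_continuousOn hc.continuousOn
  exact ⟨C, fun x => hC x (Set.mem_univ x)⟩

theorem aux_memLp_mul {c : Td d → ℂ} (hc : Continuous c) {g : Td d → ℂ}
    (hg : MemLp g 2 (volume : Measure (Td d))) :
    MemLp (fun x => c x * g x) 2 (volume : Measure (Td d)) := by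
  obtain ⟨C, hC⟩ := aux_bdd hc
  refine hg.of_le_mul (c := C) (hc.aestronglyMeasurable.mul hg.1) (ae_of_all _ fun x => ?_)
  rw [norm_mul]
  exact mul_le_mul_of_nonneg_right (hC x) (norm_nonneg _)

theorem aux_int_mul {c : Td d → ℂ} (hc : Continuous c) {g : Td d → ℂ}
    (hg : MemLp g 2 (volume : Measure (Td d))) :
    Integrable (fun x => c x * g x) (volume : Measure (Td d)) :=
  (aux_memLp_mul hc hg).integrable (by norm_num)

theorem aux_memLp_cont {c : Td d → ℂ} (hc : Continuous c) :
    MemLp c 2 (volume : Measure (Td d)) := by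
  have := aux_memLp_mul hc (memLp_const (1 : ℂ))
  simpa using this

def mkH (a : ℂ) (g : L2 d) : Hkk d := WithLp.toLp 2 (a, g)

theorem pk1_mkH (a : ℂ) (g : L2 d) : pk1 (mkH a g) = a := rfl
theorem pk2_mkH (a : ℂ) (g : L2 d) : pk2 (mkH a g) = g := rfl

theorem extH {f g : Hkk d} (h1 : pk1 f = pk1 g) (h2 : pk2 f = pk2 g) : f = g :=
  (WithLp.equiv 2 (ℂ × L2 d)).injective (Prod.ext h1 h2)

theorem normH (f : Hkk d) : ‖f‖ ^ 2 = ‖pk1 f‖ ^ 2 + ‖pk2 f‖ ^ 2 :=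
  WithLp.prod_norm_sq_eq_of_L2 f

theorem pk1_A (z : ℂ) (h : Hkk d →L[ℂ] Hkk d) (f : Hkk d) :
    pk1 ((algebraMap ℂ (Hkk d →L[ℂ] Hkk d) z - h) f) = z * pk1 f - pk1 (h f) := rfl

theorem pk2_A (z : ℂ) (h : Hkk d →L[ℂ] Hkk d) (f : Hkk d) :
    pk2 ((algebraMap ℂ (Hkk d →L[ℂ] Hkk d) z - h) f) = z • pk2 f - pk2 (h f) := rfl

theorem pk2_A_ae {v₁ : Td d → ℝ} {w₁ : Td d → Td d → ℝ} {w₂ : Td d → Td d → Td d → ℝ}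
    {K k : Td d} {h : Hkk d →L[ℂ] Hkk d} (hG : IsGenFriedrichs v₁ w₁ w₂ K k h)
    (z : ℂ) (f : Hkk d) :
    ⇑(pk2 ((algebraMap ℂ (Hkk d →L[ℂ] Hkk d) z - h) f)) =ᵐ[volume] fun q =>
      (z - (w₂ K k q : ℂ)) * (pk2 f) q - (Real.sqrt 2 : ℂ)⁻¹ * (v₁ q : ℂ) * pk1 f := by
  rw [pk2_A]
  filter_upwards [Lp.coeFn_sub (z • pk2 f) (pk2 (h f)), Lp.coeFn_smul z (pk2 f), (hG f).2]
    with q h1 h2 h3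
  rw [h1, Pi.sub_apply, h2, h3, Pi.smul_apply, smul_eq_mul]
  ring

theorem sqrt2_inv : ((Real.sqrt 2 : ℝ) : ℂ)⁻¹ * ((Real.sqrt 2 : ℝ) : ℂ)⁻¹ = 1 / 2 := by
  rw [← mul_inv, ← Complex.ofReal_mul, Real.mul_self_sqrt (by norm_num)]
  norm_num

theorem aux_arith {C V m ε : ℝ} (hm0 : 0 < m) (hmε : m ≤ ε)
    (h3 : m ≤ C ^ 2 * ((V * m) ^ 2 + ε ^ 2 * m))
    (hε : C ^ 2 * (V ^ 2 * ε + ε ^ 2) < 1) : False := by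
  have h1 : C ^ 2 * (V ^ 2 * m + ε ^ 2) ≤ C ^ 2 * (V ^ 2 * ε + ε ^ 2) := by gcongr
  have h2 : m * (C ^ 2 * (V ^ 2 * m + ε ^ 2)) < m * 1 :=
    mul_lt_mul_of_pos_left (h1.trans_lt hε) hm0
  have h4 : C ^ 2 * ((V * m) ^ 2 + ε ^ 2 * m) = m * (C ^ 2 * (V ^ 2 * m + ε ^ 2)) := by ring
  rw [h4] at h3
  linarith

set_option maxHeartbeats 800000 in
theorem mem_spec_of_range (hd : 1 ≤ d) {v₁ : Td d → ℝ} {w₁ : Td d → Td d → ℝ}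
    {w₂ : Td d → Td d → Td d → ℝ}
    {K k : Td d} {h : Hkk d →L[ℂ] Hkk d} (hG : IsGenFriedrichs v₁ w₁ w₂ K k h)
    (hv : Continuous v₁) (hw : Continuous (w₂ K k)) (q₀ : Td d) :
    ((w₂ K k q₀ : ℝ) : ℂ) ∈ spectrum ℂ h := by
  rw [spectrum.mem_iff]
  rintro ⟨u, hu⟩
  set z : ℂ := ((w₂ K k q₀ : ℝ) : ℂ) with hz
  set C : ℝ := ‖(↑u⁻¹ : Hkk d →L[ℂ] Hkk d)‖ with hC
  have hC0 : 0 ≤ C := norm_nonneg _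
  have hbound : ∀ f : Hkk d, ‖f‖ ≤ C * ‖(algebraMap ℂ (Hkk d →L[ℂ] Hkk d) z - h) f‖ := by
    intro f
    have h1 : f = (↑u⁻¹ : Hkk d →L[ℂ] Hkk d)
        ((algebraMap ℂ (Hkk d →L[ℂ] Hkk d) z - h) f) := by
      rw [← hu, ← mul_apply_eq_comp, u.inv_mul]; rfl
    have h2 := ContinuousLinearMap.le_opNorm (↑u⁻¹ : Hkk d →L[ℂ] Hkk d)
      ((algebraMap ℂ (Hkk d →L[ℂ] Hkk d) z - h) f)
    rwa [← h1] at h2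
  have hvc : Continuous fun x => (Real.sqrt 2 : ℂ)⁻¹ * (v₁ x : ℂ) := by fun_prop
  obtain ⟨V, hV⟩ := aux_bdd hvc
  have hV0 : 0 ≤ V := (norm_nonneg _).trans (hV q₀)
  obtain ⟨ε, hε0, hε⟩ : ∃ ε : ℝ, 0 < ε ∧ C ^ 2 * (V ^ 2 * ε + ε ^ 2) < 1 := by
    have ht : Tendsto (fun ε : ℝ => C ^ 2 * (V ^ 2 * ε + ε ^ 2)) (𝓝[>] 0) (𝓝 0) := by
      have : Continuous (fun ε : ℝ => C ^ 2 * (V ^ 2 * ε + ε ^ 2)) := by fun_prop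
      have := this.tendsto 0
      simp at this
      exact this.mono_left nhdsWithin_le_nhds
    have := (ht.eventually (gt_mem_nhds one_pos)).and self_mem_nhdsWithin
    obtain ⟨ε, h1, h2⟩ := this.exists
    exact ⟨ε, h2, h1⟩
  obtain ⟨U₁, hqU₁, hU₁o, hU₁⟩ := ({q₀} : Set (Td d)).exists_isOpen_lt_of_lt
    (μ := (volume : Measure (Td d))) (ENNReal.ofReal ε)
    (by rw [aux_noAtom d hd]; exact ENNReal.ofReal_pos.2 hε0)
  set U : Set (Td d) := U₁ ∩ {q | |w₂ K k q - w₂ K k q₀| < ε} with hU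
  have hUo : IsOpen U := hU₁o.inter (isOpen_lt (by fun_prop) continuous_const)
  have hqU : q₀ ∈ U := ⟨hqU₁ rfl, by simp [hε0]⟩
  have hUpos : 0 < (volume : Measure (Td d)) U := hUo.measure_pos _ ⟨q₀, hqU⟩
  have hUfin : (volume : Measure (Td d)) U ≠ ⊤ := measure_ne_top _ _
  set m : ℝ := (volume : Measure (Td d)).real U with hm
  have hm0 : 0 < m := ENNReal.toReal_pos hUpos.ne' hUfin
  have hmε : m ≤ ε := by
    refine ENNReal.toReal_le_of_le_ofReal hε0.le ?_
    exact (measure_mono inter_subset_left).trans hU₁.le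
  set g : L2 d := indicatorConstLp 2 hUo.measurableSet hUfin (1 : ℂ) with hg
  have hgae : ⇑g =ᵐ[volume] U.indicator fun _ => (1 : ℂ) := indicatorConstLp_coeFn
  have hgn : ‖g‖ ^ 2 = m := by
    rw [hg, norm_indicatorConstLp (by norm_num) (by norm_num)]
    simp only [norm_one, one_mul, ENNReal.toReal_ofNat]
    rw [← Real.sqrt_eq_rpow, Real.sq_sqrt hm0.le]
  have hA1 : ‖pk1 ((algebraMap ℂ (Hkk d →L[ℂ] Hkk d) z - h) (mkH 0 g))‖ ≤ V * m := by
    rw [pk1_A, (hG _).1, pk1_mkH, pk2_mkH]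
    have : (∫ s, (v₁ s : ℂ) * g s) = ∫ s in U, (v₁ s : ℂ) := by
      rw [← integral_indicator hUo.measurableSet]
      refine integral_congr_ae ?_
      filter_upwards [hgae] with s hs
      rw [hs]
      by_cases hsU : s ∈ U <;> simp [hsU]
    rw [this, ← integral_const_mul]
    simp only [mul_zero, zero_add, zero_sub, norm_neg]
    exact norm_setIntegral_le_of_norm_le_const hUfin.lt_top fun x _ => hV x
  have hA2 : ‖pk2 ((algebraMap ℂ (Hkk d →L[ℂ] Hkk d) z - h) (mkH 0 g))‖ ≤ ε * ‖g‖ := by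
    refine Lp.norm_le_mul_norm_of_ae_le_mul ?_
    filter_upwards [pk2_A_ae hG z (mkH 0 g), hgae] with q h1 h2
    rw [h1, pk1_mkH, pk2_mkH, h2, mul_zero, sub_zero, norm_mul]
    by_cases hq : q ∈ U
    · refine mul_le_mul_of_nonneg_right ?_ (norm_nonneg _)
      rw [hz, ← Complex.ofReal_sub, Complex.norm_real, Real.norm_eq_abs, abs_sub_comm]
      exact hq.2.le
    · simp [hq]
  have hf := hbound (mkH 0 g)
  have hf2 : ‖mkH (d := d) 0 g‖ ^ 2 ≤
      C ^ 2 * ‖(algebraMap ℂ (Hkk d →L[ℂ] Hkk d) z - h) (mkH 0 g)‖ ^ 2 := by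
    rw [← mul_pow]; exact pow_le_pow_left₀ (norm_nonneg _) hf 2
  rw [normH, normH, pk1_mkH, pk2_mkH, hgn, norm_zero] at hf2
  have hA1' := pow_le_pow_left₀ (norm_nonneg _) hA1 2
  have hA2' := pow_le_pow_left₀ (norm_nonneg _) hA2 2
  rw [mul_pow ε, hgn] at hA2'
  have h3 : m ≤ C ^ 2 * ((V * m) ^ 2 + ε ^ 2 * m) := by
    calc m = 0 ^ 2 + m := by ring
      _ ≤ _ := hf2
      _ ≤ _ := mul_le_mul_of_nonneg_left (add_le_add hA1' hA2') (sq_nonneg _)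
  exact aux_arith hm0 hmε h3 hε

/-- Outside the range of `w₂ K k` the spectrum is the zero set of `Δ`. -/
theorem mem_spec_iff {v₁ : Td d → ℝ} {w₁ : Td d → Td d → ℝ}
    {w₂ : Td d → Td d → Td d → ℝ}
    {K k : Td d} {h : Hkk d →L[ℂ] Hkk d} (hG : IsGenFriedrichs v₁ w₁ w₂ K k h)
    (hv : Continuous v₁) (hw : Continuous (w₂ K k)) (z : ℂ)
    (hz : ∀ q, ((w₂ K k q : ℝ) : ℂ) ≠ z) :
    z ∈ spectrum ℂ h ↔ Delta v₁ w₁ w₂ K k z = 0 := by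
  set c : ℂ := (Real.sqrt 2 : ℂ)⁻¹ with hc
  have hcc : c * c = 1 / 2 := sqrt2_inv
  have hz' : ∀ q, ((w₂ K k q : ℝ) : ℂ) - z ≠ 0 := fun q => sub_ne_zero.2 (hz q)
  set r : Td d → ℂ := fun q => (((w₂ K k q : ℝ) : ℂ) - z)⁻¹ with hr
  have hrc : Continuous r := by
    refine Continuous.inv₀ (by fun_prop) hz'
  have hvc : Continuous fun q => (v₁ q : ℂ) := by fun_prop
  have hrv : Continuous fun q => r q * (v₁ q : ℂ) := hrc.mul hvc
  have hD : Delta v₁ w₁ w₂ K k z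
      = (w₁ K k : ℂ) - z - (1 / 2) * ∫ t, (v₁ t : ℂ) * (r t * v₁ t) := by
    unfold Delta
    congr 2
    refine integral_congr_ae (ae_of_all _ fun t => ?_)
    simp only [hr]
    ring
  -- the general computation of `∫ v f₁` for `f₁ = r g - c α r v`
  have key : ∀ (G F : L2 d) (α : ℂ),
      (⇑F =ᵐ[volume] fun q => r q * G q - c * α * (r q * v₁ q)) →
      ∫ s, (v₁ s : ℂ) * F s = (∫ s, (v₁ s : ℂ) * (r s * G s))
        - c * α * ∫ s, (v₁ s : ℂ) * (r s * v₁ s) := by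
    intro G F α hF
    rw [← integral_const_mul, ← integral_sub]
    · refine integral_congr_ae ?_
      filter_upwards [hF] with s hs
      rw [hs]; ring
    · exact aux_int_mul hvc (aux_memLp_mul hrc (Lp.memLp G))
    · exact (aux_int_mul hvc (aux_memLp_cont hrv)).const_mul _
  -- the solution vector
  have sol : ∀ (G : L2 d) (α : ℂ), ∃ F : L2 d,
      ⇑F =ᵐ[volume] fun q => r q * G q - c * α * (r q * v₁ q) := by
    intro G α
    have hm : MemLp (fun q => r q * G q - c * α * (r q * v₁ q)) 2
        (volume : Measure (Td d)) :=
      (aux_memLp_mul hrc (Lp.memLp G)).sub ((aux_memLp_cont hrv).const_mul _)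
    exact ⟨hm.toLp _, hm.coeFn_toLp⟩
  -- second component equation
  have sec : ∀ (G F : L2 d) (α : ℂ),
      (⇑F =ᵐ[volume] fun q => r q * G q - c * α * (r q * v₁ q)) →
      pk2 ((algebraMap ℂ (Hkk d →L[ℂ] Hkk d) z - h) (mkH α F)) = -G := by
    intro G F α hF
    refine Lp.ext ?_
    filter_upwards [pk2_A_ae hG z (mkH α F), hF, Lp.coeFn_neg G] with q h1 h2 h3
    rw [h1, h3, pk1_mkH, pk2_mkH, h2, Pi.neg_apply]
    have e5 : r q * (((w₂ K k q : ℝ) : ℂ) - z) = 1 := inv_mul_cancel₀ (hz' q)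
    rw [← hc]
    linear_combination (c * α * v₁ q - G q) * e5
  have fst : ∀ (G F : L2 d) (α : ℂ),
      (⇑F =ᵐ[volume] fun q => r q * G q - c * α * (r q * v₁ q)) →
      pk1 ((algebraMap ℂ (Hkk d →L[ℂ] Hkk d) z - h) (mkH α F))
        = -(Delta v₁ w₁ w₂ K k z * α) - c * ∫ s, (v₁ s : ℂ) * (r s * G s) := by
    intro G F α hF
    rw [pk1_A, (hG _).1, pk1_mkH, pk2_mkH, key G F α hF, hD, ← hc, ← hcc]
    ring
  rw [spectrum.mem_iff, ContinuousLinearMap.isUnit_iff_bijective]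
  constructor
  · intro hnb
    by_contra hΔ
    apply hnb
    constructor
    · rw [injective_iff_map_eq_zero]
      intro f hf
      have h2 := pk2_A_ae hG z f
      rw [hf] at h2
      have h0 : ⇑(pk2 (0 : Hkk d)) =ᵐ[volume] 0 := Lp.coeFn_zero _ _ _
      have hF : ⇑(pk2 f) =ᵐ[volume]
          fun q => r q * (0 : L2 d) q - c * pk1 f * (r q * v₁ q) := by
        filter_upwards [h2, h0, Lp.coeFn_zero ℂ 2 (volume : Measure (Td d))] with q e1 e2 e3
        rw [e2] at e1
        rw [e3]
        have e4 : (((w₂ K k q : ℝ) : ℂ) - z) * (pk2 f) q = - (c * v₁ q * pk1 f) := by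
          simp only [Pi.zero_apply] at e1
          linear_combination e1
        have e5 : r q * (((w₂ K k q : ℝ) : ℂ) - z) = 1 := inv_mul_cancel₀ (hz' q)
        simp only [Pi.zero_apply]
        linear_combination r q * e4 - (pk2 f) q * e5
      have h1 := fst 0 (pk2 f) (pk1 f) hF
      have hmk : mkH (pk1 f) (pk2 f) = f := rfl
      rw [hmk, hf] at h1
      have hint : ∫ s, (v₁ s : ℂ) * (r s * (0 : L2 d) s) = 0 := by
        rw [← integral_zero (Td d) ℂ]
        refine integral_congr_ae ?_
        filter_upwards [Lp.coeFn_zero ℂ 2 (volume : Measure (Td d))] with q e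
        rw [e]; simp
      rw [hint] at h1
      have hp1 : pk1 (0 : Hkk d) = 0 := rfl
      rw [hp1] at h1
      have hα : pk1 f = 0 := by
        have : Delta v₁ w₁ w₂ K k z * pk1 f = 0 := by linear_combination h1
        exact (mul_eq_zero.1 this).resolve_left hΔ
      refine extH hα ?_
      refine Lp.ext ?_
      filter_upwards [hF, h0, Lp.coeFn_zero ℂ 2 (volume : Measure (Td d))] with q e1 e2 e3
      rw [e1, e2, e3, hα]
      simp
    · intro g
      set I : ℂ := ∫ s, (v₁ s : ℂ) * (r s * (-pk2 g : L2 d) s) with hI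
      set α : ℂ := (-(pk1 g) - c * I) / Delta v₁ w₁ w₂ K k z with hα
      obtain ⟨F, hF⟩ := sol (-pk2 g) α
      refine ⟨mkH α F, extH ?_ ?_⟩
      · rw [fst _ F α hF, ← hI, hα, mul_div_cancel₀ _ hΔ]
        ring
      · rw [sec _ F α hF, neg_neg]
  · rintro hΔ ⟨hinj, -⟩
    obtain ⟨F, hF⟩ := sol 0 1
    have hint : ∫ s, (v₁ s : ℂ) * (r s * (0 : L2 d) s) = 0 := by
      rw [← integral_zero (Td d) ℂ]
      refine integral_congr_ae ?_
      filter_upwards [Lp.coeFn_zero ℂ 2 (volume : Measure (Td d))] with q e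
      rw [e]; simp
    have h0 : (algebraMap ℂ (Hkk d →L[ℂ] Hkk d) z - h) (mkH 1 F) = 0 := by
      refine extH ?_ ?_
      · rw [fst _ F 1 hF, hint, hΔ]
        simp [show pk1 (0 : Hkk d) = 0 from rfl]
      · rw [sec _ F 1 hF, neg_zero]; rfl
    have h1 : mkH 1 F = 0 := hinj (h0.trans (map_zero _).symm)
    have h2 : pk1 (mkH 1 F) = 0 := by rw [h1]; rfl
    rw [pk1_mkH] at h2
    exact one_ne_zero h2

theorem range_eq_Icc_aux {X : Type*} [TopologicalSpace X] [CompactSpace X] [ConnectedSpace X]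
    {f : X → ℝ} (hf : Continuous f) : Set.range f = Set.Icc (⨅ x, f x) (⨆ x, f x) := by
  have h := eq_Icc_of_connected_compact (isConnected_range hf) (isCompact_range hf)
  exact h

/-- For every `K ∈ T^d`, the union over `k ∈ T^d` of the spectra of the
generalized Friedrichs models equals `Σ_K = [m_K, M_K] ∪ Λ_K`. -/
theorem iUnion_spectrum_genFriedrichs
    (d : ℕ) (hd : 1 ≤ d)
    (w₀ v₀ v₁ : Td d → ℝ) (w₁ : Td d → Td d → ℝ) (w₂ : Td d → Td d → Td d → ℝ)
    (hw₀ : Continuous w₀) (hv₀ : Continuous v₀) (hv₁ : Continuous v₁)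
    (hw₁ : Continuous fun x : Td d × Td d => w₁ x.1 x.2)
    (hw₂ : Continuous fun x : Td d × Td d × Td d => w₂ x.1 x.2.1 x.2.2)
    (hsym : ∀ K p q : Td d, w₂ K p q = w₂ K q p)
    (K : Td d) (h : Td d → Hkk d →L[ℂ] Hkk d)
    (hh : ∀ k : Td d, IsGenFriedrichs v₁ w₁ w₂ K k (h k)) :
    (⋃ k : Td d, spectrum ℂ (h k)) = SigK v₁ w₁ w₂ K := by
  have hwk : ∀ k, Continuous (w₂ K k) := fun k =>
    hw₂.comp (by fun_prop : Continuous fun q : Td d => (K, k, q))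
  have hwK : Continuous fun x : Td d × Td d => w₂ K x.1 x.2 :=
    hw₂.comp (by fun_prop : Continuous fun x : Td d × Td d => (K, x.1, x.2))
  have hb : ∀ k, bandKk w₂ K k = Complex.ofReal '' Set.range (w₂ K k) := fun k => by
    rw [range_eq_Icc_aux (hwk k)]; rfl
  have hB : bigBand w₂ K = Complex.ofReal '' Set.range fun x : Td d × Td d => w₂ K x.1 x.2 := by
    rw [range_eq_Icc_aux hwK]; rfl
  ext z
  simp only [SigK, LamK, hB, hb, Set.mem_iUnion, Set.mem_union, Set.mem_setOf_eq]
  constructor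
  · rintro ⟨k, hk⟩
    by_cases hz : z ∈ Complex.ofReal '' Set.range (w₂ K k)
    · left
      obtain ⟨_, ⟨q, rfl⟩, rfl⟩ := hz
      exact ⟨_, ⟨(k, q), rfl⟩, rfl⟩
    · right
      exact ⟨k, hz, (mem_spec_iff (hh k) hv₁ (hwk k) z
        fun q hq => hz ⟨_, ⟨q, rfl⟩, hq⟩).1 hk⟩
  · rintro (⟨_, ⟨⟨k, q⟩, rfl⟩, rfl⟩ | ⟨k, hz, hΔ⟩)
    · exact ⟨k, mem_spec_of_range hd (hh k) hv₁ (hwk k) q⟩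
    · exact ⟨k, (mem_spec_iff (hh k) hv₁ (hwk k) z
        fun q hq => hz ⟨_, ⟨q, rfl⟩, hq⟩).2 hΔ⟩
end
end

section
/- For every K ∈ T^d, the channel operator H_ch(K) has purely essential spectrum and its spectrum equals Σ_K, that is, σ(H_ch(K)) = σ_ess(H_ch(K)) = Σ_K and σ_disc(H_ch(K)) = ∅. -/
open MeasureTheory Complex Filter Topology Set

noncomputable section

/-- The Hilbert space `L²(T^d) ⊕ L²((T^d)²)` on which the channel operator acts. -/
abbrev HchSp (d : ℕ) := WithLp 2 (L2 d × L2two d)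

def c1 {d : ℕ} (f : HchSp d) : L2 d := (WithLp.equiv 2 _ f).1

def c2 {d : ℕ} (f : HchSp d) : L2two d := (WithLp.equiv 2 _ f).2

/-- The essential spectrum of a bounded operator on a Hilbert space, via the Weyl criterion:
`λ ∈ σ_ess(A)` iff there is an orthonormal (singular) sequence `u` with `‖(A - λ)uₙ‖ → 0`. -/
def essSpec {H' : Type*} [NormedAddCommGroup H'] [InnerProductSpace ℂ H']
    (A : H' →L[ℂ] H') : Set ℂ :=
  {l | ∃ u : ℕ → H', Orthonormal ℂ u ∧
        Tendsto (fun n => ‖A (u n) - l • u n‖) atTop (𝓝 0)}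

variable {d : ℕ}

/-- The defining equations of the channel operator `H_ch(K)` acting on
`L²(T^d) ⊕ L²((T^d)²)`:
`(H_ch f)₁(p) = w₁(K; p) f₁(p) + (1/√2) ∫ v₁(t) f₂(p,t) dt`,
`(H_ch f)₂(p,q) = (1/√2) v₁(q) f₁(p) + w₂(K; p,q) f₂(p,q)`. -/
def IsChannel {d : ℕ} (v₁ : Td d → ℝ) (w₁ : Td d → Td d → ℝ)
    (w₂ : Td d → Td d → Td d → ℝ) (K : Td d) (Hc : HchSp d →L[ℂ] HchSp d) : Prop :=
  ∀ f : HchSp d,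
    (⇑(c1 (Hc f)) =ᵐ[volume] fun p =>
        (w₁ K p : ℂ) * (c1 f) p +
          (Real.sqrt 2 : ℂ)⁻¹ * (∫ t, (v₁ t : ℂ) * (c2 f) (p, t))) ∧
    (⇑(c2 (Hc f)) =ᵐ[volume] fun x : Td d × Td d =>
        (Real.sqrt 2 : ℂ)⁻¹ * (v₁ x.2 : ℂ) * (c1 f) x.1 +
          (w₂ K x.1 x.2 : ℂ) * (c2 f) x)


def inc {d : ℕ} (a : L2 d) (b : L2two d) : HchSp d := WithLp.toLp 2 (a, b)

theorem c1_inc (a : L2 d) (b : L2two d) : c1 (inc a b) = a := rfl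
theorem c2_inc (a : L2 d) (b : L2two d) : c2 (inc a b) = b := rfl
theorem c1_sub (f g : HchSp d) : c1 (f - g) = c1 f - c1 g := rfl
theorem c2_sub (f g : HchSp d) : c2 (f - g) = c2 f - c2 g := rfl
theorem c1_smul (z : ℂ) (g : HchSp d) : c1 (z • g) = z • c1 g := rfl
theorem c2_smul (z : ℂ) (g : HchSp d) : c2 (z • g) = z • c2 g := rfl
theorem ext_c {f g : HchSp d} (h1 : c1 f = c1 g) (h2 : c2 f = c2 g) : f = g :=
  (WithLp.equiv 2 _).injective (Prod.ext h1 h2)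

theorem norm_sq_c (f : HchSp d) : ‖f‖ ^ 2 = ‖c1 f‖ ^ 2 + ‖c2 f‖ ^ 2 :=
  WithLp.prod_norm_sq_eq_of_L2 f

theorem inner_c (f g : HchSp d) :
    inner ℂ f g = inner ℂ (c1 f) (c1 g) + inner ℂ (c2 f) (c2 g) :=
  WithLp.prod_inner_apply f g

theorem norm_c1_le (f : HchSp d) : ‖c1 f‖ ≤ ‖f‖ := by
  have := norm_sq_c f
  exact le_of_sq_le_sq (by nlinarith [sq_nonneg ‖c2 f‖]) (norm_nonneg _)

theorem norm_le_c (f : HchSp d) : ‖f‖ ≤ ‖c1 f‖ + ‖c2 f‖ := by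
  have := norm_sq_c f
  have h1 := norm_nonneg (c1 f)
  have h2 := norm_nonneg (c2 f)
  exact le_of_sq_le_sq (by nlinarith) (by positivity)

theorem mulLp {α : Type*} [MeasurableSpace α] {μ : Measure α} (g : α → ℂ)
    (hg : AEStronglyMeasurable g μ) (C : ℝ) (hC : ∀ x, ‖g x‖ ≤ C) (f : Lp ℂ 2 μ) :
    ∃ h : Lp ℂ 2 μ, h =ᵐ[μ] fun x => g x * f x := by
  have : MemLp (fun x => g x * f x) 2 μ := by
    refine (Lp.memLp f).of_le_mul (c := C) (hg.mul (Lp.aestronglyMeasurable f)) ?_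
    filter_upwards with x
    rw [norm_mul]
    gcongr
    exact hC x
  exact ⟨this.toLp _, this.coeFn_toLp⟩

theorem inner_zero_of_disj {α : Type*} [MeasurableSpace α] {μ : Measure α} (f g : Lp ℂ 2 μ)
    (A B : Set α) (hAB : Disjoint A B) (hf : ∀ᵐ x ∂μ, x ∉ A → f x = 0)
    (hg : ∀ᵐ x ∂μ, x ∉ B → g x = 0) : inner ℂ f g = 0 := by
  rw [L2.inner_def]
  apply integral_eq_zero_of_ae
  filter_upwards [hf, hg] with x h1 h2
  by_cases hx : x ∈ A
  · have : x ∉ B := fun h => Set.disjoint_left.1 hAB hx h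
    simp [h2 this]
  · simp [h1 hx]

theorem ess_of {H' : Type*} [NormedAddCommGroup H'] [InnerProductSpace ℂ H']
    (A : H' →L[ℂ] H') (z : ℂ) (f : ℕ → H') (hne : ∀ n, f n ≠ 0)
    (horth : ∀ m n, m ≠ n → inner ℂ (f m) (f n) = 0) 
    (hb : ∀ ε > 0, ∀ᶠ n in atTop, ‖A (f n) - z • f n‖ ≤ ε * ‖f n‖) : z ∈ essSpec A := by
  refine ⟨fun n => ((‖f n‖⁻¹ : ℝ) : ℂ) • f n, ⟨?_, ?_⟩, ?_⟩
  · intro n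
    have := norm_ne_zero_iff.2 (hne n)
    rw [norm_smul]; simp [this]
  · intro m n hmn
    simp [inner_smul_left, inner_smul_right, horth m n hmn]
  · rw [Metric.tendsto_atTop']
    intro ε hε
    obtain ⟨N, hN⟩ := eventually_atTop.1 (hb (ε / 2) (by positivity))
    refine ⟨N, fun n hn => ?_⟩
    have h0 := norm_pos_iff.2 (hne n)
    rw [map_smul, smul_comm z, ← smul_sub, norm_smul]
    simp only [Complex.norm_real, norm_inv, norm_norm, dist_zero_right, norm_mul]
    rw [inv_mul_lt_iff₀ h0, mul_comm]
    have := hN n hn.le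
    nlinarith

theorem ess_sub_spec {H' : Type*} [NormedAddCommGroup H'] [InnerProductSpace ℂ H']
    (A : H' →L[ℂ] H') : essSpec A ⊆ spectrum ℂ A := by
  rintro z ⟨u, hu, ht⟩ hz
  rw [spectrum.mem_resolventSet_iff] at hz
  obtain ⟨U, hU⟩ := hz
  have hinv : ∀ x, (↑U⁻¹ : H' →L[ℂ] H') (z • x - A x) = x := by
    intro x
    have h1 : (↑U⁻¹ : H' →L[ℂ] H') * (U : H' →L[ℂ] H') = 1 := U.inv_mul
    have h2 := congrArg (fun T : H' →L[ℂ] H' => T x) h1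
    rw [hU] at h2
    simpa [Algebra.algebraMap_eq_smul_one] using h2
  have hb : ∀ n, 1 ≤ ‖(↑U⁻¹ : H' →L[ℂ] H')‖ * ‖A (u n) - z • u n‖ := by
    intro n
    calc (1 : ℝ) = ‖u n‖ := (hu.1 n).symm
      _ = ‖(↑U⁻¹ : H' →L[ℂ] H') (z • u n - A (u n))‖ := by rw [hinv]
      _ ≤ _ := by rw [norm_sub_rev (A (u n))]; exact ContinuousLinearMap.le_opNorm _ _
  have := ht.const_mul ‖(↑U⁻¹ : H' →L[ℂ] H')‖
  rw [mul_zero] at this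
  exact absurd (ge_of_tendsto' this hb) (by norm_num)

/-- annuli around a point -/
theorem annuli (hd : 1 ≤ d) (p : Td d) : ∃ U : ℕ → Set (Td d), (∀ n, IsOpen (U n)) ∧
    (∀ n, (U n).Nonempty) ∧ (∀ m n, m ≠ n → Disjoint (U m) (U n)) ∧
    ∀ N ∈ 𝓝 p, ∀ᶠ n in atTop, U n ⊆ N := by
  obtain ⟨x, hx⟩ : ∃ x : Td d, x ≠ p := by
    refine ⟨fun i => p i + ((Real.pi : ℝ) : AddCircle (2 * Real.pi)), fun h => ?_⟩
    have := congrFun h ⟨0, hd⟩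
    simp only [add_eq_left] at this
    rw [AddCircle.coe_eq_zero_iff] at this
    obtain ⟨n, hn⟩ := this
    have hpi := Real.pi_pos
    have : (n : ℝ) * 2 = 1 := by
      rw [zsmul_eq_mul] at hn
      have : Real.pi * ((n : ℝ) * 2 - 1) = 0 := by linarith
      rcases mul_eq_zero.1 this with h | h <;> linarith
    have h2 : n * 2 = 1 := by exact_mod_cast this
    omega
  set D := dist x p with hD
  have hDpos : 0 < D := dist_pos.2 hx
  set r : ℕ → ℝ := fun n => D / (n + 1) with hr
  have hanti : StrictAnti r := by
    intro m n hmn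
    have : (m : ℝ) < n := by exact_mod_cast hmn
    simp only [hr]; gcongr
  refine ⟨fun n => {y | r (n + 1) < dist y p ∧ dist y p < r n}, ?_, ?_, ?_, ?_⟩
  · intro n
    have hc : Continuous fun y : Td d => dist y p := by fun_prop
    exact (isOpen_lt continuous_const hc).inter (isOpen_lt hc continuous_const)
  · intro n
    have h1 := hanti (Nat.lt_succ_self n)
    obtain ⟨s, hs1, hs2⟩ := exists_between h1
    have hs : s ∈ Set.Icc (dist p p) (dist x p) := by
      have hn0 : 0 < r (n + 1) := by simp only [hr]; positivity
      have h0 : r n ≤ r 0 := hanti.antitone (Nat.zero_le n)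
      have : r 0 = D := by simp [hr]
      rw [dist_self]
      constructor <;> simp only [Nat.succ_eq_add_one] at * <;> linarith
    obtain ⟨y, hy⟩ := intermediate_value_univ p x (f := fun y => dist y p) (by fun_prop) hs
    exact ⟨y, by
      have hy' : dist y p = s := hy
      exact ⟨hy' ▸ hs1, hy' ▸ hs2⟩⟩
  · have key : ∀ m n, m < n →
        Disjoint {y : Td d | r (m + 1) < dist y p ∧ dist y p < r m}
          {y : Td d | r (n + 1) < dist y p ∧ dist y p < r n} := by
      intro m n h
      rw [Set.disjoint_left]
      rintro y ⟨h1, -⟩ ⟨-, h2⟩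
      have := hanti.antitone (Nat.succ_le_of_lt h)
      simp only [Nat.succ_eq_add_one] at this
      linarith
    intro m n hmn
    rcases lt_or_gt_of_ne hmn with h | h
    · exact key m n h
    · exact (key n m h).symm
  · intro N hN
    obtain ⟨ε, hε, hb⟩ := Metric.mem_nhds_iff.1 hN
    have ht : Tendsto r atTop (𝓝 0) := by
      have := (tendsto_one_div_add_atTop_nhds_zero_nat (𝕜 := ℝ)).const_mul D
      simpa [hr, div_eq_mul_inv] using this
    filter_upwards [ht.eventually_lt_const hε] with n hn y hy
    exact hb (lt_trans hy.2 hn)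

theorem meas_tendsto (U : ℕ → Set (Td d)) (hU : ∀ n, IsOpen (U n))
    (hdisj : ∀ m n, m ≠ n → Disjoint (U m) (U n)) :
    Tendsto (fun n => (volume : Measure (Td d)).real (U n)) atTop (𝓝 0) := by
  have h1 : ∑' n, (volume : Measure (Td d)) (U n) ≠ ⊤ := by
    rw [← measure_iUnion (fun m n h => hdisj m n h) (fun n => (hU n).measurableSet)]
    exact measure_ne_top _ _
  have h2 := ENNReal.tendsto_atTop_zero_of_tsum_ne_top h1
  have := (ENNReal.tendsto_toReal ENNReal.zero_ne_top).comp h2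
  exact this

section core
variable {v₁ : Td d → ℝ} {w₁ : Td d → Td d → ℝ} {w₂ : Td d → Td d → Td d → ℝ} {K : Td d}

theorem ne_of_band (hW : Continuous fun x : Td d × Td d => w₂ K x.1 x.2) {k : Td d} {z : ℂ}
    (hz : z ∉ bandKk w₂ K k) (q : Td d) : (w₂ K k q : ℂ) - z ≠ 0 := by
  intro h
  apply hz
  have hc : Continuous fun q => w₂ K k q := hW.comp (by fun_prop : Continuous fun q : Td d => (k, q))
  refine ⟨w₂ K k q, ⟨?_, ?_⟩, sub_eq_zero.1 h⟩
  · exact ciInf_le (isCompact_range hc).bddBelow q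
  · exact le_ciSup (isCompact_range hc).bddAbove q

theorem band_sub (hW : Continuous fun x : Td d × Td d => w₂ K x.1 x.2) (k : Td d) :
    bandKk w₂ K k ⊆ bigBand w₂ K := by
  refine Set.image_mono (Set.Icc_subset_Icc ?_ ?_)
  · exact le_ciInf fun q => ciInf_le (isCompact_range hW).bddBelow (k, q)
  · exact ciSup_le fun q => le_ciSup (isCompact_range hW).bddAbove (k, q)

theorem exists_of_bigBand (hW : Continuous fun x : Td d × Td d => w₂ K x.1 x.2) {z : ℂ}
    (hz : z ∈ bigBand w₂ K) : ∃ p q, (w₂ K p q : ℂ) = z := by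
  obtain ⟨x, ⟨h1, h2⟩, rfl⟩ := hz
  obtain ⟨a, ha⟩ := (isCompact_range hW).sInf_mem (Set.range_nonempty _)
  obtain ⟨b, hb⟩ := (isCompact_range hW).sSup_mem (Set.range_nonempty _)
  obtain ⟨y, hy⟩ := intermediate_value_univ a b hW ⟨ha.trans_le h1, h2.trans_eq hb.symm⟩
  exact ⟨y.1, y.2, by exact_mod_cast hy⟩

theorem nhds_bound (hW : Continuous fun x : Td d × Td d => w₂ K x.1 x.2) {k : Td d} {z : ℂ}
    (hz : ∀ q, (w₂ K k q : ℂ) - z ≠ 0) :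
    ∃ c > 0, ∀ᶠ p in 𝓝 k, ∀ q, c ≤ ‖(w₂ K p q : ℂ) - z‖ := by
  have hF : Continuous fun x : Td d × Td d => ‖(w₂ K x.1 x.2 : ℂ) - z‖ := by fun_prop
  have hc : Continuous fun q => ‖(w₂ K k q : ℂ) - z‖ :=
    hF.comp (by fun_prop : Continuous fun q : Td d => (k, q))
  obtain ⟨q0, -, h0⟩ := isCompact_univ.exists_isMinOn (Set.univ_nonempty) hc.continuousOn
  have hpos : 0 < ‖(w₂ K k q0 : ℂ) - z‖ := norm_pos_iff.2 (hz q0)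
  refine ⟨‖(w₂ K k q0 : ℂ) - z‖ / 2, by positivity, ?_⟩
  have := isCompact_univ.eventually_forall_of_forall_eventually (x₀ := k) (K := (Set.univ : Set (Td d)))
    (P := fun p q => ‖(w₂ K k q0 : ℂ) - z‖ / 2 ≤ ‖(w₂ K p q : ℂ) - z‖) (by
      intro q _
      have hq : ‖(w₂ K k q0 : ℂ) - z‖ / 2 < ‖(w₂ K k q : ℂ) - z‖ := by
        have : ‖(w₂ K k q0 : ℂ) - z‖ ≤ ‖(w₂ K k q : ℂ) - z‖ := h0 (Set.mem_univ q)
        linarith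
      filter_upwards [(hF.tendsto (k, q)).eventually_const_lt hq] with x hx using hx.le)
  filter_upwards [this] with p hp q using hp q (Set.mem_univ q)

theorem delta_cont (hv₁ : Continuous v₁) (hW1 : Continuous fun p => w₁ K p)
    (hW : Continuous fun x : Td d × Td d => w₂ K x.1 x.2) {k : Td d} {z : ℂ}
    (hz : ∀ q, (w₂ K k q : ℂ) - z ≠ 0) : ContinuousAt (fun p => Delta v₁ w₁ w₂ K p z) k := by
  obtain ⟨c, hc, hb⟩ := nhds_bound hW hz
  have : ContinuousAt (fun p => ∫ t, (v₁ t : ℂ) ^ 2 / ((w₂ K p t : ℂ) - z)) k := by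
    refine continuousAt_of_dominated (bound := fun t => |v₁ t| ^ 2 / c) ?_ ?_ ?_ ?_
    · filter_upwards [hb] with p hp
      refine (Continuous.div (by fun_prop) ?_ ?_).aestronglyMeasurable
      · have : Continuous fun q => w₂ K p q :=
          hW.comp (by fun_prop : Continuous fun q : Td d => (p, q))
        fun_prop
      · intro t
        exact norm_pos_iff.1 (hc.trans_le (hp t))
    · filter_upwards [hb] with p hp
      filter_upwards with t
      rw [norm_div, norm_pow, Complex.norm_real, Real.norm_eq_abs]
      gcongr
      exact hp t
    · have : Continuous fun t => |v₁ t| ^ 2 / c := by fun_prop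
      exact this.integrable_of_hasCompactSupport (HasCompactSupport.of_compactSpace _)
    · filter_upwards with t
      have : Continuous fun p => w₂ K p t :=
          hW.comp (by fun_prop : Continuous fun p : Td d => (p, t))
      exact ContinuousAt.div (by fun_prop) (by fun_prop) (hz t)
  unfold Delta
  fun_prop

variable {Hc : HchSp d →L[ℂ] HchSp d}

theorem key (hW : Continuous fun x : Td d × Td d => w₂ K x.1 x.2)
    (hHc : IsChannel v₁ w₁ w₂ K Hc) (z : ℂ) (B : Set (Td d)) (hB : MeasurableSet B) (c : ℝ)
    (hc : 0 < c) (hBc : ∀ p ∈ B, ∀ q, c ≤ ‖(w₂ K p q : ℂ) - z‖) (f₁ : L2 d)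
    (hf₁ : ∀ᵐ p, p ∉ B → f₁ p = 0) :
    ∃ f₂ : L2two d, (∀ᵐ x : Td d × Td d, x ∉ B ×ˢ (Set.univ : Set (Td d)) → f₂ x = 0) ∧
      c2 (Hc (inc f₁ f₂) - z • inc f₁ f₂) = 0 ∧
      c1 (Hc (inc f₁ f₂) - z • inc f₁ f₂) =ᵐ[volume] fun p => Delta v₁ w₁ w₂ K p z * f₁ p := by
  set G : Td d × Td d → ℂ :=
    (B ×ˢ (Set.univ : Set (Td d))).indicator fun x => -((w₂ K x.1 x.2 : ℂ) - z)⁻¹ with hG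
  have hGm : Measurable G := by
    refine Measurable.indicator ?_ (hB.prod MeasurableSet.univ)
    have := hW.measurable
    fun_prop
  have hGb : ∀ x, ‖G x‖ ≤ c⁻¹ := by
    intro x
    by_cases hx : x ∈ B ×ˢ (Set.univ : Set (Td d))
    · rw [hG, Set.indicator_of_mem hx, norm_neg, norm_inv]
      gcongr
      exact hBc _ hx.1 _
    · rw [hG, Set.indicator_of_notMem hx, norm_zero]; positivity
  obtain ⟨f₂, hf₂⟩ := mulLp (μ := (volume : Measure (Td d × Td d))) G
    hGm.aestronglyMeasurable _ hGb (c2 (Hc (inc f₁ 0)))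
  have hS := (hHc (inc f₁ 0)).2
  have h00 := Lp.coeFn_zero ℂ 2 (volume : Measure (Td d × Td d))
  simp only [c1_inc, c2_inc] at hS
  -- formula for f₂
  have hform : ∀ᵐ x : Td d × Td d,
      f₂ x = G x * ((Real.sqrt 2 : ℂ)⁻¹ * (v₁ x.2 : ℂ) * f₁ x.1) := by
    filter_upwards [hf₂, hS, h00] with x h1 h2 h3
    rw [h1, h2, h3]
    simp
  have hf1' : ∀ᵐ x : Td d × Td d, x.1 ∉ B → f₁ x.1 = 0 :=
    Measure.quasiMeasurePreserving_fst.ae hf₁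
  refine ⟨f₂, ?_, ?_, ?_⟩
  · filter_upwards [hform] with x hx hxB
    rw [hx, hG, Set.indicator_of_notMem hxB, zero_mul]
  · rw [c2_sub, c2_smul, c2_inc]
    apply Lp.ext
    have h2 := (hHc (inc f₁ f₂)).2
    simp only [c1_inc, c2_inc] at h2
    filter_upwards [hform, hf1', h2, h00, Lp.coeFn_sub (c2 (Hc (inc f₁ f₂))) (z • f₂),
      Lp.coeFn_smul z f₂] with x e1 e2 e3 e4 e5 e6
    rw [e5, Pi.sub_apply, e6, e3, e4, Pi.smul_apply, smul_eq_mul, Pi.zero_apply]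
    by_cases hx : x.1 ∈ B
    · have hm : x ∈ B ×ˢ (Set.univ : Set (Td d)) := ⟨hx, trivial⟩
      have hne : (w₂ K x.1 x.2 : ℂ) - z ≠ 0 := norm_pos_iff.1 (hc.trans_le (hBc _ hx _))
      rw [e1, hG, Set.indicator_of_mem hm]
      field_simp
      ring
    · rw [e1, e2 hx]; ring
  · rw [c1_sub, c1_smul, c1_inc]
    have h2 := (hHc (inc f₁ f₂)).1
    simp only [c1_inc, c2_inc] at h2
    have hsec := Measure.ae_ae_of_ae_prod (μ := (volume : Measure (Td d)))
      (ν := (volume : Measure (Td d))) hform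
    filter_upwards [hsec, hf₁, h2, Lp.coeFn_sub (c1 (Hc (inc f₁ f₂))) (z • f₁),
      Lp.coeFn_smul z f₁] with p e1 e2 e3 e5 e6
    rw [e5, Pi.sub_apply, e6, e3, Pi.smul_apply, smul_eq_mul]
    have hint : (∫ t, (v₁ t : ℂ) * f₂ (p, t)) =
        -((Real.sqrt 2 : ℂ)⁻¹ * f₁ p) * ∫ t, (v₁ t : ℂ) ^ 2 / ((w₂ K p t : ℂ) - z) := by
      rw [← integral_const_mul]
      apply integral_congr_ae
      filter_upwards [e1] with t ht
      rw [ht]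
      by_cases hx : p ∈ B
      · have hm : (p, t) ∈ B ×ˢ (Set.univ : Set (Td d)) := ⟨hx, trivial⟩
        rw [hG, Set.indicator_of_mem hm]
        simp only
        rw [div_eq_mul_inv]
        ring
      · rw [e2 hx]; simp
    have h2' : (Real.sqrt 2 : ℂ)⁻¹ * (Real.sqrt 2 : ℂ)⁻¹ = 1 / 2 := by
      rw [← mul_inv, ← Complex.ofReal_mul, Real.mul_self_sqrt (by norm_num)]
      norm_num
    rw [hint]
    unfold Delta
    linear_combination (-(f₁ p) * ∫ t, (v₁ t : ℂ) ^ 2 / ((w₂ K p t : ℂ) - z)) * h2'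


theorem spec_sub (hv₁ : Continuous v₁) (hW1 : Continuous fun p => w₁ K p)
    (hW : Continuous fun x : Td d × Td d => w₂ K x.1 x.2)
    (hHc : IsChannel v₁ w₁ w₂ K Hc) : spectrum ℂ Hc ⊆ SigK v₁ w₁ w₂ K := by
  intro z hz
  by_contra hS
  apply hz
  have hS1 : z ∉ bigBand w₂ K := fun h => hS (Or.inl h)
  have hband : ∀ k, z ∉ bandKk w₂ K k := fun k h => hS1 (band_sub hW k h)
  have hne : ∀ p q, (w₂ K p q : ℂ) - z ≠ 0 := fun p q => ne_of_band hW (hband p) q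
  have hΔ : ∀ p, Delta v₁ w₁ w₂ K p z ≠ 0 := fun p h => hS (Or.inr ⟨p, hband p, h⟩)
  have hΔc : Continuous fun p => Delta v₁ w₁ w₂ K p z :=
    continuous_iff_continuousAt.2 fun k => delta_cont hv₁ hW1 hW (hne k)
  have hF : Continuous fun x : Td d × Td d => ‖(w₂ K x.1 x.2 : ℂ) - z‖ := by fun_prop
  obtain ⟨x0, -, h0⟩ := isCompact_univ.exists_isMinOn (Set.univ_nonempty) hF.continuousOn
  obtain ⟨k0, -, hk0⟩ := isCompact_univ.exists_isMinOn (Set.univ_nonempty) hΔc.norm.continuousOn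
  set c := ‖(w₂ K x0.1 x0.2 : ℂ) - z‖ with hcdef
  have hc : 0 < c := norm_pos_iff.2 (hne _ _)
  have hcb : ∀ p q, c ≤ ‖(w₂ K p q : ℂ) - z‖ := fun p q => h0 (Set.mem_univ (p, q))
  set e := ‖Delta v₁ w₁ w₂ K k0 z‖ with hedef
  have he : 0 < e := norm_pos_iff.2 (hΔ _)
  have heb : ∀ p, e ≤ ‖Delta v₁ w₁ w₂ K p z‖ := fun p => hk0 (Set.mem_univ p)
  -- bijectivity
  have hbij : Function.Bijective (Hc - z • (1 : HchSp d →L[ℂ] HchSp d)) := by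
    constructor
    · rw [injective_iff_map_eq_zero]
      intro f hf
      have hf' : Hc f - z • f = 0 := by simpa using hf
      obtain ⟨f₂, -, h2, h3⟩ := key hW hHc z Set.univ MeasurableSet.univ c hc
        (fun p _ q => hcb p q) (c1 f) (by simp)
      -- the second components agree
      have hfe : Hc f = z • f := sub_eq_zero.1 hf'
      have e2 := (hHc f).2
      have e2' := (hHc (inc (c1 f) f₂)).2
      rw [hfe, c2_smul] at e2
      rw [c2_sub, sub_eq_zero, c2_smul] at h2
      rw [h2] at e2'
      simp only [c1_inc, c2_inc] at e2'
      have hff : f₂ = c2 f := by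
        apply Lp.ext
        filter_upwards [e2, e2', Lp.coeFn_smul z f₂, Lp.coeFn_smul z (c2 f)] with x a1 a2 a3 a4
        rw [a4] at a1
        rw [a3] at a2
        simp only [Pi.smul_apply, smul_eq_mul] at a1 a2
        apply mul_left_cancel₀ (hne x.1 x.2)
        linear_combination a1 - a2
      have hfeq : inc (c1 f) f₂ = f := by rw [hff]; rfl
      rw [hfeq, hf'] at h3
      have h1 : c1 f = 0 := by
        apply Lp.ext
        have h00 := Lp.coeFn_zero ℂ 2 (volume : Measure (Td d))
        filter_upwards [h3, h00] with p a1 a2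
        have a2' : (c1 (0 : HchSp d)) p = 0 := a2
        rw [a2'] at a1
        rw [a2]
        exact (mul_eq_zero.1 a1.symm).resolve_left (hΔ p)
      have h2z : c2 f = 0 := by
        apply Lp.ext
        have h00 := Lp.coeFn_zero ℂ 2 (volume : Measure (Td d))
        have h00' := Lp.coeFn_zero ℂ 2 (volume : Measure (Td d × Td d))
        have h4 : ∀ᵐ x : Td d × Td d, (0 : L2 d) x.1 = 0 :=
          Measure.quasiMeasurePreserving_fst.ae h00
        rw [h1] at e2
        filter_upwards [e2, h00', h4, Lp.coeFn_smul z (c2 f)] with x a1 a2 a3 a4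
        rw [a4, a3] at a1
        simp only [Pi.smul_apply, smul_eq_mul] at a1
        rw [a2]
        apply mul_left_cancel₀ (hne x.1 x.2)
        rw [Pi.zero_apply]
        linear_combination -a1
      exact ext_c h1 h2z
    · intro g
      obtain ⟨h, hh⟩ := mulLp (μ := (volume : Measure (Td d × Td d)))
        (fun x => ((w₂ K x.1 x.2 : ℂ) - z)⁻¹)
        (by have := hW.measurable
            exact Measurable.aestronglyMeasurable (by fun_prop)) c⁻¹
        (by intro x; rw [norm_inv]; gcongr; exact hcb _ _) (c2 g)
      set r := Hc (inc 0 h) - z • inc 0 h with hr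
      have hr2 : c2 r = c2 g := by
        rw [hr, c2_sub, c2_smul, c2_inc]
        have h2 := (hHc (inc 0 h)).2
        simp only [c1_inc, c2_inc] at h2
        apply Lp.ext
        have h00 := Lp.coeFn_zero ℂ 2 (volume : Measure (Td d))
        have h4 : ∀ᵐ x : Td d × Td d, (0 : L2 d) x.1 = 0 :=
          Measure.quasiMeasurePreserving_fst.ae h00
        filter_upwards [hh, h2, h4, Lp.coeFn_sub (c2 (Hc (inc 0 h))) (z • h),
          Lp.coeFn_smul z h] with x a1 a2 a3 a4 a5
        rw [a4, Pi.sub_apply, a5, a2, a3, Pi.smul_apply, smul_eq_mul, a1]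
        have := hne x.1 x.2
        field_simp
        ring
      obtain ⟨f₁, hf₁⟩ := mulLp (μ := (volume : Measure (Td d)))
        (fun p => (Delta v₁ w₁ w₂ K p z)⁻¹)
        (by have := hΔc.measurable
            exact Measurable.aestronglyMeasurable (by fun_prop)) e⁻¹
        (by intro x; rw [norm_inv]; gcongr; exact heb _) (c1 g - c1 r)
      obtain ⟨f₂, -, k2, k1⟩ := key hW hHc z Set.univ MeasurableSet.univ c hc
        (fun p _ q => hcb p q) f₁ (by simp)
      refine ⟨inc f₁ f₂ + inc 0 h, ?_⟩
      have : (Hc - z • (1 : HchSp d →L[ℂ] HchSp d)) (inc f₁ f₂ + inc 0 h) =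
          (Hc (inc f₁ f₂) - z • inc f₁ f₂) + r := by
        rw [map_add, hr]; simp
      rw [this, ← eq_sub_iff_add_eq]
      apply ext_c
      · rw [c1_sub g r]
        apply Lp.ext
        filter_upwards [k1, hf₁] with p a1 a2
        rw [a1, a2, mul_inv_cancel_left₀ (hΔ p)]
      · rw [k2, c2_sub, hr2, sub_self]
  have hu := ContinuousLinearMap.isUnit_iff_bijective.2 hbij
  rw [spectrum.mem_resolventSet_iff, Algebra.algebraMap_eq_smul_one, ← IsUnit.neg_iff, neg_sub]
  exact hu

theorem orth_c (B B' : Set (Td d)) (h : Disjoint B B') (f g : HchSp d)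
    (hf1 : ∀ᵐ p, p ∉ B → c1 f p = 0) (hg1 : ∀ᵐ p, p ∉ B' → c1 g p = 0)
    (hf2 : ∀ᵐ x : Td d × Td d, x ∉ B ×ˢ (Set.univ : Set (Td d)) → c2 f x = 0)
    (hg2 : ∀ᵐ x : Td d × Td d, x ∉ B' ×ˢ (Set.univ : Set (Td d)) → c2 g x = 0) :
    inner ℂ f g = 0 := by
  rw [inner_c, inner_zero_of_disj _ _ B B' h hf1 hg1,
    inner_zero_of_disj _ _ _ _ (Set.disjoint_prod.2 (Or.inl h)) hf2 hg2, add_zero]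

theorem lam_ess (hd : 1 ≤ d) (hv₁ : Continuous v₁) (hW1 : Continuous fun p => w₁ K p)
    (hW : Continuous fun x : Td d × Td d => w₂ K x.1 x.2)
    (hHc : IsChannel v₁ w₁ w₂ K Hc) : LamK v₁ w₁ w₂ K ⊆ essSpec Hc := by
  rintro z ⟨k, hk, hΔ⟩
  have hne := ne_of_band hW hk
  obtain ⟨c, hc, hb⟩ := nhds_bound hW hne
  have hΔc := delta_cont (w₁ := w₁) hv₁ hW1 hW hne
  obtain ⟨U, hUo, hUne, hUd, hUn⟩ := annuli hd k
  obtain ⟨n0, hn0⟩ := eventually_atTop.1 (hUn _ hb)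
  have hmeas : ∀ n, MeasurableSet (U (n + n0)) := fun n => (hUo _).measurableSet
  set f₁ : ℕ → L2 d := fun n => indicatorConstLp 2 (hmeas n) (measure_ne_top volume _) (1 : ℂ)
    with hf₁
  have hf₁0 : ∀ n, ∀ᵐ p, p ∉ U (n + n0) → f₁ n p = 0 := by
    intro n
    filter_upwards [indicatorConstLp_coeFn (p := 2) (hs := hmeas n)
      (hμs := measure_ne_top (volume : Measure (Td d)) _) (c := (1 : ℂ))] with p hp hpU
    simp only [hf₁]
    rw [hp, Set.indicator_of_notMem hpU]
  choose f₂ h0 h2 h1 using fun n => key hW hHc z (U (n + n0)) (hmeas n) c hc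
    (fun p hp q => hn0 (n + n0) (by omega) hp q) (f₁ n) (hf₁0 n)
  refine ess_of Hc z (fun n => inc (f₁ n) (f₂ n)) ?_ ?_ ?_
  · intro n hn
    have : f₁ n = 0 := congrArg c1 hn
    have hnorm : ‖f₁ n‖ = 0 := by rw [this, norm_zero]
    rw [hf₁, norm_indicatorConstLp (by norm_num) (by norm_num)] at hnorm
    have hpos : 0 < (volume : Measure (Td d)).real (U (n + n0)) :=
      ENNReal.toReal_pos ((hUo _).measure_pos _ (hUne _)).ne' (measure_ne_top _ _)
    have := Real.rpow_pos_of_pos hpos (1 / (2 : ENNReal).toReal)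
    rw [norm_one, one_mul] at hnorm
    linarith
  · intro m n hmn
    exact orth_c _ _ (hUd (m + n0) (n + n0) (by omega)) _ _ (hf₁0 m) (hf₁0 n) (h0 m) (h0 n)
  · intro ε hε
    have hN : ∀ᶠ p in 𝓝 k, ‖Delta v₁ w₁ w₂ K p z‖ < ε := by
      have := hΔc.norm
      refine Tendsto.eventually_lt_const ?_ this
      simpa [hΔ] using hε
    have hsh := (tendsto_add_atTop_nat n0).eventually (hUn _ hN)
    filter_upwards [hsh] with n hn
    refine (norm_le_c _).trans ?_
    rw [h2 n, norm_zero, add_zero]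
    refine le_trans ?_ (mul_le_mul_of_nonneg_left (norm_c1_le _) hε.le)
    rw [c1_inc]
    apply Lp.norm_le_mul_norm_of_ae_le_mul
    filter_upwards [h1 n, hf₁0 n] with p a1 a2
    rw [a1, norm_mul]
    by_cases hp : p ∈ U (n + n0)
    · have : ‖Delta v₁ w₁ w₂ K p z‖ < ε := hn hp
      gcongr
    · rw [a2 hp]; simp

theorem band_ess (hd : 1 ≤ d) (hv₁ : Continuous v₁)
    (hW : Continuous fun x : Td d × Td d => w₂ K x.1 x.2)
    (hHc : IsChannel v₁ w₁ w₂ K Hc) : bigBand w₂ K ⊆ essSpec Hc := by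
  intro z hz
  obtain ⟨p0, q0, hpq⟩ := exists_of_bigBand hW hz
  obtain ⟨U, hUo, hUne, hUd, hUn⟩ := annuli hd p0
  obtain ⟨C, hCo, hCne, hCd, hCn⟩ := annuli hd q0
  have hCt := meas_tendsto C hCo hCd
  obtain ⟨V, hV⟩ : ∃ V, ∀ t, |v₁ t| ≤ V := by
    obtain ⟨V, hV⟩ := (isCompact_range hv₁.abs).bddAbove
    exact ⟨V, fun t => hV ⟨t, rfl⟩⟩
  have hV0 : 0 ≤ V := (abs_nonneg _).trans (hV q0)
  have hm1 : ∀ n, MeasurableSet (U n) := fun n => (hUo _).measurableSet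
  have hmC : ∀ n, MeasurableSet (C n) := fun n => (hCo _).measurableSet
  have hm : ∀ n, MeasurableSet (U n ×ˢ C n) := fun n => (hm1 n).prod (hmC n)
  have hUpos : ∀ n, 0 < (volume : Measure (Td d)).real (U n) := fun n =>
      ENNReal.toReal_pos ((hUo _).measure_pos _ (hUne _)).ne' (measure_ne_top _ _)
  have hCpos : ∀ n, 0 < (volume : Measure (Td d)).real (C n) := fun n =>
      ENNReal.toReal_pos ((hCo _).measure_pos _ (hCne _)).ne' (measure_ne_top _ _)
  set g : ℕ → L2 d := fun n => indicatorConstLp 2 (hm1 n) (measure_ne_top volume _) (1 : ℂ)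
    with hg
  set f : ℕ → L2two d := fun n => indicatorConstLp 2 (hm n) (measure_ne_top volume _) (1 : ℂ)
    with hf
  have hgn : ∀ n, ‖g n‖ = Real.sqrt ((volume : Measure (Td d)).real (U n)) := by
    intro n
    rw [hg, norm_indicatorConstLp (by norm_num) (by norm_num), Real.sqrt_eq_rpow]
    simp
  have hfn : ∀ n, ‖f n‖ = Real.sqrt ((volume : Measure (Td d)).real (U n)) *
      Real.sqrt ((volume : Measure (Td d)).real (C n)) := by
    intro n
    rw [hf, norm_indicatorConstLp (by norm_num) (by norm_num), ← Real.sqrt_mul (by positivity),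
      Real.sqrt_eq_rpow, Measure.volume_eq_prod, measureReal_prod_prod]
    simp
  have hfc : ∀ n, f n =ᵐ[volume] (U n ×ˢ C n).indicator fun _ => (1 : ℂ) :=
    fun n => indicatorConstLp_coeFn
  have hgc : ∀ n, g n =ᵐ[volume] (U n).indicator fun _ => (1 : ℂ) :=
    fun n => indicatorConstLp_coeFn
  have hz1 := Lp.coeFn_zero ℂ 2 (volume : Measure (Td d))
  have hz4 : ∀ᵐ x : Td d × Td d, (0 : L2 d) x.1 = 0 :=
          Measure.quasiMeasurePreserving_fst.ae hz1
  have hfn' : ∀ n, ‖inc 0 (f n)‖ = ‖f n‖ := by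
    intro n
    have := norm_sq_c (inc 0 (f n))
    rw [c1_inc, c2_inc, norm_zero] at this
    exact (sq_eq_sq₀ (norm_nonneg _) (norm_nonneg _)).1 (by linarith)
  refine ess_of Hc z (fun n => inc 0 (f n)) ?_ ?_ ?_
  · intro n
    rw [← norm_ne_zero_iff, hfn', hfn]
    have := Real.sqrt_pos.2 (hUpos n)
    have := Real.sqrt_pos.2 (hCpos n)
    positivity
  · have hsupp : ∀ n, ∀ᵐ x : Td d × Td d, x ∉ U n ×ˢ (Set.univ : Set (Td d)) → f n x = 0 := by
      intro n
      filter_upwards [hfc n] with x hx hxU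
      rw [hx, Set.indicator_of_notMem]
      exact fun h => hxU ⟨h.1, trivial⟩
    have hzz : ∀ B : Set (Td d), ∀ᵐ p, p ∉ B → (0 : L2 d) p = 0 := by
      intro B
      filter_upwards [hz1] with p hp _ using hp
    intro m n hmn
    exact orth_c _ _ (hUd m n hmn) _ _ (hzz _) (hzz _) (hsupp m) (hsupp n)
  · intro ε hε
    have hF : Continuous fun x : Td d × Td d => ‖(w₂ K x.1 x.2 : ℂ) - z‖ := by fun_prop
    have hN : ∀ᶠ x in 𝓝 (p0, q0), ‖(w₂ K x.1 x.2 : ℂ) - z‖ < ε / 2 := by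
      refine Tendsto.eventually_lt_const ?_ (hF.tendsto (p0, q0))
      simp only [hpq, sub_self, norm_zero]; positivity
    rw [nhds_prod_eq] at hN
    obtain ⟨N1, hN1, N2, hN2, hNN⟩ := Filter.mem_prod_iff.1 hN
    have hsq : Tendsto (fun n => V * Real.sqrt ((volume : Measure (Td d)).real (C n))) atTop (𝓝 0) := by
      have := (Real.continuous_sqrt.tendsto 0).comp hCt
      have := this.const_mul V
      simpa using this
    filter_upwards [hUn _ hN1, hCn _ hN2, hsq.eventually_lt_const (half_pos hε)] with n hn1 hn2 hn3
    refine (norm_le_c _).trans ?_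
    rw [hfn']
    have b2 : ‖c2 (Hc (inc 0 (f n)) - z • inc 0 (f n))‖ ≤ ε / 2 * ‖f n‖ := by
      rw [c2_sub, c2_smul, c2_inc]
      apply Lp.norm_le_mul_norm_of_ae_le_mul
      have e2 := (hHc (inc 0 (f n))).2
      simp only [c1_inc, c2_inc] at e2
      filter_upwards [e2, hfc n, hz4, Lp.coeFn_sub (c2 (Hc (inc 0 (f n)))) (z • f n),
        Lp.coeFn_smul z (f n)] with x a1 a2 a3 a4 a5
      rw [a4, Pi.sub_apply, a5, a1, a3, Pi.smul_apply, smul_eq_mul, mul_zero, zero_add, ← sub_mul,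
        norm_mul]
      by_cases hx : x ∈ U n ×ˢ C n
      · have : ‖(w₂ K x.1 x.2 : ℂ) - z‖ < ε / 2 := hNN (Set.mk_mem_prod (hn1 hx.1) (hn2 hx.2))
        gcongr
      · rw [a2, Set.indicator_of_notMem hx]; simp
    have b1 : ‖c1 (Hc (inc 0 (f n)) - z • inc 0 (f n))‖ ≤
        (V * (volume : Measure (Td d)).real (C n)) * ‖g n‖ := by
      rw [c1_sub, c1_smul, c1_inc, smul_zero, sub_zero]
      apply Lp.norm_le_mul_norm_of_ae_le_mul
      have e1 := (hHc (inc 0 (f n))).1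
      simp only [c1_inc, c2_inc] at e1
      have hsec := Measure.ae_ae_of_ae_prod (μ := (volume : Measure (Td d)))
        (ν := (volume : Measure (Td d))) (hfc n)
      filter_upwards [e1, hsec, hgc n, hz1] with p a1 a2 a3 a4
      rw [a1, a3, a4, Pi.zero_apply, mul_zero, zero_add]
      by_cases hp : p ∈ U n
      · rw [Set.indicator_of_mem hp, norm_one, mul_one, norm_mul]
        have hi : (∫ t, (v₁ t : ℂ) * f n (p, t)) = ∫ t in C n, (v₁ t : ℂ) := by
          rw [← integral_indicator (hmC n)]
          apply integral_congr_ae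
          filter_upwards [a2] with t ht
          rw [ht]
          by_cases htC : t ∈ C n
          · rw [Set.indicator_of_mem htC, Set.indicator_of_mem (Set.mk_mem_prod hp htC), mul_one]
          · rw [Set.indicator_of_notMem htC, Set.indicator_of_notMem (fun h => htC h.2), mul_zero]
        rw [hi]
        have h1 : ‖∫ t in C n, (v₁ t : ℂ)‖ ≤ V * (volume : Measure (Td d)).real (C n) := by
          refine norm_setIntegral_le_of_norm_le_const (measure_lt_top _ _) ?_
          intro t _
          rw [Complex.norm_real]; exact hV t
        have h2 : ‖(Real.sqrt 2 : ℂ)⁻¹‖ ≤ 1 := by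
          rw [norm_inv, Complex.norm_real, Real.norm_eq_abs, abs_of_nonneg (Real.sqrt_nonneg _)]
          apply inv_le_one_of_one_le₀
          rw [Real.one_le_sqrt]; norm_num
        calc _ ≤ 1 * (V * (volume : Measure (Td d)).real (C n)) := by gcongr
          _ = _ := one_mul _
      · have hi : (∫ t, (v₁ t : ℂ) * f n (p, t)) = 0 := by
          apply integral_eq_zero_of_ae
          filter_upwards [a2] with t ht
          rw [ht, Set.indicator_of_notMem (fun h => hp h.1), mul_zero, Pi.zero_apply]
        rw [hi, Set.indicator_of_notMem hp]; simp
    have b3 : (V * (volume : Measure (Td d)).real (C n)) * ‖g n‖ ≤ ε / 2 * ‖f n‖ := by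
      rw [hgn, hfn]
      have hs := Real.mul_self_sqrt (hCpos n).le
      calc _ = (V * Real.sqrt ((volume : Measure (Td d)).real (C n))) *
            (Real.sqrt ((volume : Measure (Td d)).real (U n)) *
              Real.sqrt ((volume : Measure (Td d)).real (C n))) := by
            linear_combination (-V * Real.sqrt ((volume : Measure (Td d)).real (U n))) * hs
        _ ≤ _ := by gcongr
    linarith

end core

/-- For every `K ∈ T^d`, the channel operator `H_ch(K)` has purely essential
spectrum and `σ(H_ch(K)) = σ_ess(H_ch(K)) = Σ_K`, `σ_disc(H_ch(K)) = ∅`. -/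
theorem channel_purely_essential
    (d : ℕ) (hd : 1 ≤ d)
    (w₀ v₀ v₁ : Td d → ℝ) (w₁ : Td d → Td d → ℝ) (w₂ : Td d → Td d → Td d → ℝ)
    (hw₀ : Continuous w₀) (hv₀ : Continuous v₀) (hv₁ : Continuous v₁)
    (hw₁ : Continuous fun x : Td d × Td d => w₁ x.1 x.2)
    (hw₂ : Continuous fun x : Td d × Td d × Td d => w₂ x.1 x.2.1 x.2.2)
    (hsym : ∀ K p q : Td d, w₂ K p q = w₂ K q p)
    (K : Td d) (Hc : HchSp d →L[ℂ] HchSp d)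
    (hHc : IsChannel v₁ w₁ w₂ K Hc) :
    spectrum ℂ Hc = SigK v₁ w₁ w₂ K ∧
    essSpec Hc = SigK v₁ w₁ w₂ K ∧
    spectrum ℂ Hc \ essSpec Hc = ∅ := by
  have hW : Continuous fun x : Td d × Td d => w₂ K x.1 x.2 :=
    hw₂.comp (by fun_prop : Continuous fun x : Td d × Td d => (K, x.1, x.2))
  have hW1 : Continuous fun p => w₁ K p :=
    hw₁.comp (by fun_prop : Continuous fun p : Td d => (K, p))
  have h1 := spec_sub hv₁ hW1 hW hHc
  have h2 : SigK v₁ w₁ w₂ K ⊆ essSpec Hc :=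
    Set.union_subset (band_ess hd hv₁ hW hHc) (lam_ess hd hv₁ hW1 hW hHc)
  have h3 := ess_sub_spec Hc
  exact ⟨h1.antisymm (h2.trans h3), (h3.trans h1).antisymm h2, Set.sdiff_eq_empty.2 (h1.trans h2)⟩
end
end

section
/- Let K ∈ T^d, let z ∈ ℂ \ [m_K, M_K], and suppose f = (f_0, f_1, f_2) is an eigenvector of H(K) with eigenvalue z. Then the two-particle component is determined by the one-particle component: f_2(p, q) = −(v_1(q) f_1(p) + v_1(p) f_1(q)) / (2(w_2(K; p, q) − z)) for almost every (p, q) ∈ (T^d)². -/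
open MeasureTheory Complex Filter Topology Set

noncomputable section

/-- The swap map on `L²((T^d)²)`, `(S f)(p,q) = f(q,p)`. -/
def swapL (d : ℕ) : L2two d →ₗ[ℂ] L2two d :=
  Lp.compMeasurePreservingₗ ℂ Prod.swap MeasureTheory.Measure.measurePreserving_swap

/-- The subspace `L²_sym((T^d)²)` of symmetric functions, as the fixed-point space of swap. -/
def symSub (d : ℕ) : Submodule ℂ (L2two d) := LinearMap.ker (swapL d - LinearMap.id)

abbrev L2sym (d : ℕ) := ↥(symSub d)

instance (d : ℕ) : CompleteSpace (L2sym d) := by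
  have hiso : Isometry (swapL d) :=
    Lp.isometry_compMeasurePreserving MeasureTheory.Measure.measurePreserving_swap
  have hcl : IsClosed ((symSub d : Set (L2two d))) := by
    have h1 : (symSub d : Set (L2two d)) = {f | swapL d f = f} := by
      ext f
      simp [symSub, LinearMap.mem_ker, sub_eq_zero, LinearMap.sub_apply]
    rw [h1]
    exact isClosed_eq hiso.continuous continuous_id
  exact hcl.completeSpace_coe

/-- The Hilbert space `H = ℂ ⊕ L²(T^d) ⊕ L²_sym((T^d)²)`. -/
abbrev H3 (d : ℕ) := WithLp 2 (ℂ × WithLp 2 (L2 d × L2sym d))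

/-- The zero-particle component. -/
def p0 {d : ℕ} (f : H3 d) : ℂ := (WithLp.equiv 2 _ f).1

/-- The one-particle component. -/
def p1 {d : ℕ} (f : H3 d) : L2 d := (WithLp.equiv 2 _ ((WithLp.equiv 2 _ f).2)).1

/-- The two-particle component, as an element of `L²((T^d)²)`. -/
def p2 {d : ℕ} (f : H3 d) : L2two d :=
  ((WithLp.equiv 2 _ ((WithLp.equiv 2 _ f).2)).2 : L2sym d)

variable {d : ℕ}

/-- The defining equations of the `3×3` operator matrix `H(K)` acting on
`ℂ ⊕ L²(T^d) ⊕ L²_sym((T^d)²)`: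
`(H f)₀ = w₀(K) f₀ + ∫ v₀(t) f₁(t) dt`,
`(H f)₁(p) = v₀(p) f₀ + w₁(K; p) f₁(p) + ∫ v₁(t) f₂(p,t) dt`,
`(H f)₂(p,q) = (1/2)(v₁(p) f₁(q) + v₁(q) f₁(p)) + w₂(K; p,q) f₂(p,q)`. -/
def IsHamiltonian {d : ℕ} (w₀ v₀ v₁ : Td d → ℝ) (w₁ : Td d → Td d → ℝ)
    (w₂ : Td d → Td d → Td d → ℝ) (K : Td d) (H : H3 d →L[ℂ] H3 d) : Prop :=
  ∀ f : H3 d,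
    (p0 (H f) = (w₀ K : ℂ) * p0 f + (∫ t, (v₀ t : ℂ) * (p1 f) t)) ∧
    (⇑(p1 (H f)) =ᵐ[volume] fun p =>
        (v₀ p : ℂ) * p0 f + (w₁ K p : ℂ) * (p1 f) p +
          (∫ t, (v₁ t : ℂ) * (p2 f) (p, t))) ∧
    (⇑(p2 (H f)) =ᵐ[volume] fun x : Td d × Td d =>
        ((v₁ x.1 : ℂ) * (p1 f) x.2 + (v₁ x.2 : ℂ) * (p1 f) x.1) / 2 +
          (w₂ K x.1 x.2 : ℂ) * (p2 f) x)

/-- If `z ∈ ℂ \ [m_K, M_K]` and `f = (f₀, f₁, f₂)` is an eigenvector of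
`H(K)` with eigenvalue `z`, then
`f₂(p,q) = −(v₁(q) f₁(p) + v₁(p) f₁(q)) / (2(w₂(K;p,q) − z))` for a.e. `(p,q)`. -/
theorem eigenvector_two_particle_component
    (d : ℕ) (hd : 1 ≤ d)
    (w₀ v₀ v₁ : Td d → ℝ) (w₁ : Td d → Td d → ℝ) (w₂ : Td d → Td d → Td d → ℝ)
    (hw₀ : Continuous w₀) (hv₀ : Continuous v₀) (hv₁ : Continuous v₁)
    (hw₁ : Continuous fun x : Td d × Td d => w₁ x.1 x.2)
    (hw₂ : Continuous fun x : Td d × Td d × Td d => w₂ x.1 x.2.1 x.2.2)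
    (hsym : ∀ K p q : Td d, w₂ K p q = w₂ K q p)
    (K : Td d) (z : ℂ) (hz : z ∉ bigBand w₂ K)
    (H : H3 d →L[ℂ] H3 d) (hH : IsHamiltonian w₀ v₀ v₁ w₁ w₂ K H)
    (f : H3 d) (hf0 : f ≠ 0) (hf : H f = z • f) :
    ⇑(p2 f) =ᵐ[volume] fun x : Td d × Td d =>
      -(((v₁ x.2 : ℂ) * (p1 f) x.1 + (v₁ x.1 : ℂ) * (p1 f) x.2) /
        (2 * ((w₂ K x.1 x.2 : ℂ) - z))) := by
  have hne : ∀ x : Td d × Td d, (w₂ K x.1 x.2 : ℂ) - z ≠ 0 := by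
    intro x hx
    apply hz
    have hc : Continuous fun x : Td d × Td d => w₂ K x.1 x.2 :=
      hw₂.comp (continuous_const.prodMk continuous_id)
    have hcpt := isCompact_range hc
    exact ⟨w₂ K x.1 x.2, ⟨ciInf_le hcpt.bddBelow x, le_ciSup hcpt.bddAbove x⟩,
      sub_eq_zero.mp hx⟩
  have h2 := (hH f).2.2
  have hsm : p2 (H f) = z • p2 f := by
    rw [hf]
    rfl
  rw [hsm] at h2
  filter_upwards [h2, Lp.coeFn_smul z (p2 f)] with x hx hs
  rw [hs, Pi.smul_apply, smul_eq_mul] at hx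
  have hn := hne x
  rw [← neg_div, eq_div_iff (mul_ne_zero two_ne_zero hn)]
  linear_combination (-2 : ℂ) * hx
end
end

section
/- Fix K ∈ T^d, a point p_1 ∈ T^d, a number z_1 ∈ ℂ \ [m_K, M_K], and n' ∈ ℕ, and for n ∈ ℕ set V_n(p_1) = {p ∈ T^d : 1/(n + n' + 1) < |p − p_1| < 1/(n + n')}. Then there exists an orthonormal system {c_n} in L²(T^d) such that supp c_n ⊆ V_n(p_1) for every n and, for all n ≠ m, ∫_{V_n(p_1)} ∫_{V_m(p_1)} v_1(p) v_1(q) c_n(p) c_m(q) / (w_2(K; p, q) − z_1)² dp dq = 0. -/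
open MeasureTheory Complex Filter Topology Set

noncomputable section

variable {d : ℕ}

lemma aux_step {H : Type*} [NormedAddCommGroup H] [InnerProductSpace ℂ H]
    (E : Submodule ℂ H) (hE : ¬ FiniteDimensional ℂ E) (B : H →ₗ[ℂ] H →ₗ[ℂ] ℂ) (S : Finset H) :
    ∃ x ∈ E, ‖x‖ = 1 ∧ ∀ y ∈ S, inner ℂ y x = 0 ∧ B y x = 0 := by
  let L : E →ₗ[ℂ] (S → ℂ × ℂ) := LinearMap.pi fun y =>
    ((innerSL ℂ (y : H)).toLinearMap.prod (B y)).comp E.subtype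
  have hL : ¬ Function.Injective L := fun h => hE (FiniteDimensional.of_injective L h)
  rw [← LinearMap.ker_eq_bot, Submodule.eq_bot_iff] at hL
  push Not at hL
  obtain ⟨x, hx, hx0⟩ := hL
  have hx0' : (x : H) ≠ 0 := fun h => hx0 (Subtype.ext h)
  refine ⟨((‖(x : H)‖⁻¹ : ℝ) : ℂ) • (x : H), E.smul_mem _ x.2, ?_, ?_⟩
  · rw [norm_smul]
    simp [hx0']
  · intro y hy
    have h := congrFun (LinearMap.mem_ker.1 hx) ⟨y, hy⟩
    have h1 : inner ℂ y (x : H) = 0 := congrArg Prod.fst h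
    have h2 : B y (x : H) = 0 := congrArg Prod.snd h
    rw [inner_smul_right, map_smul, h1, h2]
    simp

lemma aux_seq {H : Type*} [NormedAddCommGroup H] [InnerProductSpace ℂ H]
    (E : ℕ → Submodule ℂ H) (hE : ∀ n, ¬ FiniteDimensional ℂ (E n)) (B : H →ₗ[ℂ] H →ₗ[ℂ] ℂ)
    (hB : ∀ x y, B x y = B y x) :
    ∃ c : ℕ → H, Orthonormal ℂ c ∧ (∀ n, c n ∈ E n) ∧ ∀ n m, n ≠ m → B (c n) (c m) = 0 := by
  classical
  choose f hf1 hf2 hf3 using fun n S => aux_step (E n) (hE n) B S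
  let S : ℕ → Finset H := fun n => Nat.rec ∅ (fun k s => insert (f k s) s) n
  have hS : ∀ n, S (n + 1) = insert (f n (S n)) (S n) := fun n => rfl
  have hmono : Monotone S := monotone_nat_of_le_succ fun n => by
    rw [hS]; exact Finset.subset_insert _ _
  have hlt : ∀ m n, m < n → f m (S m) ∈ S n := fun m n h =>
    hmono (Nat.succ_le_of_lt h) (by rw [Nat.succ_eq_add_one, hS]; exact Finset.mem_insert_self _ _)
  refine ⟨fun n => f n (S n), ⟨fun n => hf2 _ _, ?_⟩, fun n => hf1 _ _, ?_⟩
  · intro n m hnm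
    rcases lt_or_gt_of_ne hnm with h | h
    · exact (hf3 _ _ _ (hlt _ _ h)).1
    · exact inner_eq_zero_symm.1 (hf3 _ _ _ (hlt _ _ h)).1
  · intro n m hnm
    rcases lt_or_gt_of_ne hnm with h | h
    · exact (hf3 _ _ _ (hlt _ _ h)).2
    · rw [hB]; exact (hf3 _ _ _ (hlt _ _ h)).2

lemma aux_int (k : Td d → Td d → ℂ) (hk : Continuous fun x : Td d × Td d => k x.1 x.2)
    (f g : L2 d) : Integrable (fun x : Td d × Td d => f x.1 * g x.2 * k x.1 x.2)
      ((volume : Measure (Td d)).prod volume) := by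
  have hf : Integrable f volume := (Lp.memLp f).integrable (by norm_num)
  have hg : Integrable g volume := (Lp.memLp g).integrable (by norm_num)
  obtain ⟨C, hC⟩ := isCompact_univ.exists_bound_of_continuousOn hk.continuousOn
  exact (hf.mul_prod hg).mul_bdd (c := C) hk.aestronglyMeasurable
    (Eventually.of_forall fun x => hC x (mem_univ _))

lemma aux_symm (k : Td d → Td d → ℂ) (hk : Continuous fun x : Td d × Td d => k x.1 x.2)
    (hs : ∀ p q, k p q = k q p) (f g : L2 d) :
    ∫ p, ∫ q, f p * g q * k p q = ∫ p, ∫ q, g p * f q * k p q := by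
  rw [integral_integral_swap (aux_int k hk f g)]
  congr 1; ext p; congr 1; ext q
  rw [hs]; ring

lemma aux_add (k : Td d → Td d → ℂ) (hk : Continuous fun x : Td d × Td d => k x.1 x.2)
    (f f' g : L2 d) :
    ∫ p, ∫ q, (f + f' : L2 d) p * g q * k p q =
      (∫ p, ∫ q, f p * g q * k p q) + ∫ p, ∫ q, f' p * g q * k p q := by
  have h1 := aux_int k hk f g
  have h2 := aux_int k hk f' g
  rw [← integral_integral_add h1 h2]
  apply integral_congr_ae
  filter_upwards [Lp.coeFn_add f f'] with p hp
  congr 1; ext q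
  rw [hp, Pi.add_apply]; ring

lemma aux_smul (k : Td d → Td d → ℂ) (a : ℂ) (f g : L2 d) :
    ∫ p, ∫ q, (a • f : L2 d) p * g q * k p q = a * ∫ p, ∫ q, f p * g q * k p q := by
  rw [← integral_const_mul]
  apply integral_congr_ae
  filter_upwards [Lp.coeFn_smul a f] with p hp
  rw [← integral_const_mul]
  congr 1; ext q
  rw [hp, Pi.smul_apply, smul_eq_mul]; ring

lemma aux_bilin (k : Td d → Td d → ℂ) (hk : Continuous fun x : Td d × Td d => k x.1 x.2)
    (hs : ∀ p q, k p q = k q p) :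
    ∃ B : L2 d →ₗ[ℂ] L2 d →ₗ[ℂ] ℂ, ∀ f g, B f g = ∫ p, ∫ q, f p * g q * k p q := by
  refine ⟨LinearMap.mk₂ ℂ (fun f g => ∫ p, ∫ q, f p * g q * k p q) ?_ ?_ ?_ ?_, fun f g => rfl⟩
  · intro f f' g; exact aux_add k hk f f' g
  · intro a f g; exact aux_smul k a f g
  · intro f g g'
    rw [aux_symm k hk hs f, aux_symm k hk hs f, aux_symm k hk hs f]
    exact aux_add k hk g g' f
  · intro a f g
    rw [aux_symm k hk hs f, aux_symm k hk hs f]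
    exact aux_smul k a g f

/-- functions supported in a set -/
def suppIn (V : Set (Td d)) : Submodule ℂ (L2 d) where
  carrier := {f | ∀ᵐ p ∂(volume : Measure (Td d)), p ∉ V → f p = 0}
  zero_mem' := by
    filter_upwards [Lp.coeFn_zero ℂ 2 (volume : Measure (Td d))] with p hp _
    rw [hp]; rfl
  add_mem' := by
    intro f g hf hg
    change ∀ᵐ p ∂(volume : Measure (Td d)), p ∉ V → (f + g : L2 d) p = 0
    filter_upwards [Lp.coeFn_add f g, hf, hg] with p hp h1 h2 hV
    rw [hp, Pi.add_apply, h1 hV, h2 hV, add_zero]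
  smul_mem' := by
    intro a f hf
    change ∀ᵐ p ∂(volume : Measure (Td d)), p ∉ V → (a • f : L2 d) p = 0
    filter_upwards [Lp.coeFn_smul a f, hf] with p hp h1 hV
    rw [hp, Pi.smul_apply, h1 hV, smul_zero]

/-- annulus -/
def annu (p₁ : Td d) (a b : ℝ) : Set (Td d) := {p | a < dist p p₁ ∧ dist p p₁ < b}

lemma annu_open (p₁ : Td d) (a b : ℝ) : IsOpen (annu p₁ a b) := by
  have h : Continuous fun p : Td d => dist p p₁ := by fun_prop
  exact (isOpen_lt continuous_const h).inter (isOpen_lt h continuous_const)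

lemma annu_nonempty (hd : 1 ≤ d) (p₁ : Td d) (a b : ℝ) (ha : 0 ≤ a) (hab : a < b) (hb : b ≤ 1) :
    (annu p₁ a b).Nonempty := by
  have : Nonempty (Fin d) := ⟨⟨0, hd⟩⟩
  refine ⟨p₁ + fun _ => (((a + b) / 2 : ℝ) : AddCircle (2 * Real.pi)), ?_⟩
  have h : ‖(((a + b) / 2 : ℝ) : AddCircle (2 * Real.pi))‖ = (a + b) / 2 := by
    have hpi := Real.pi_gt_three
    have h0 : 0 ≤ (a + b) / 2 := by linarith
    rw [(AddCircle.norm_coe_eq_abs_iff _ (by positivity)).2, abs_of_nonneg h0]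
    rw [abs_of_nonneg h0, abs_of_pos (by positivity)]
    linarith
  have h2 : dist (p₁ + fun _ => (((a + b) / 2 : ℝ) : AddCircle (2 * Real.pi))) p₁ = (a + b) / 2 := by
    rw [dist_eq_norm, add_sub_cancel_left, pi_norm_const, h]
  constructor <;> rw [h2] <;> linarith

lemma suppIn_inf (hd : 1 ≤ d) (p₁ : Td d) (a b : ℝ) (ha : 0 ≤ a) (hab : a < b) (hb : b ≤ 1) :
    ¬ FiniteDimensional ℂ (suppIn (annu p₁ a b)) := by
  intro hfin
  let t : ℕ → ℝ := fun j => a + (b - a) / (j + 1)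
  have ht : ∀ i j, i < j → t j < t i := by
    intro i j hij
    have : (i : ℝ) < j := by exact_mod_cast hij
    have hba : 0 < b - a := sub_pos.2 hab
    simp only [t]
    gcongr
  have ht' : ∀ i j, i ≤ j → t j ≤ t i := by
    intro i j hij
    rcases hij.eq_or_lt with rfl | h
    · exact le_rfl
    · exact (ht _ _ h).le
  have hta : ∀ j, a < t j := fun j => by
    have hba : 0 < b - a := sub_pos.2 hab
    simp only [t]; linarith [show 0 < (b - a) / ((j : ℝ) + 1) by positivity]
  have htb : ∀ j, t j ≤ b := fun j => (ht' 0 j (Nat.zero_le _)).trans (by simp [t])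
  let A : ℕ → Set (Td d) := fun j => annu p₁ (t (j + 1)) (t j)
  have hAm : ∀ j, MeasurableSet (A j) := fun j => (annu_open _ _ _).measurableSet
  have hAf : ∀ j, volume (A j) ≠ ⊤ := fun j => measure_ne_top _ _
  have hA0 : ∀ j, volume (A j) ≠ 0 := fun j =>
    (annu_open _ _ _).measure_ne_zero _ (annu_nonempty hd p₁ _ _ (ha.trans (hta _).le)
      (ht _ _ (Nat.lt_succ_self j)) ((htb j).trans hb))
  have hdis : ∀ i j, i < j → Disjoint (A i) (A j) := by
    intro i j hij
    rw [Set.disjoint_left]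
    intro p hp hq
    have := ht' (i + 1) j hij
    exact absurd (hp.1.trans hq.2) (not_lt.2 this)
  let e : ℕ → L2 d := fun j => indicatorConstLp 2 (hAm j) (hAf j) (1 : ℂ)
  have horth : ∀ i j, i < j → inner ℂ (e i) (e j) = 0 := by
    intro i j hij
    rw [L2.inner_indicatorConstLp_eq_inner_setIntegral]
    have : ∫ x in A i, (e j) x = 0 := by
      apply integral_eq_zero_of_ae
      rw [EventuallyEq, ae_restrict_iff' (hAm i)]
      filter_upwards [indicatorConstLp_coeFn (p := 2) (hs := hAm j) (hμs := hAf j) (c := (1 : ℂ))]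
        with x hx hxi
      rw [hx, indicator_of_notMem (Set.disjoint_left.1 (hdis i j hij) hxi)]; rfl
    rw [this, inner_zero_right]
  have hmem : ∀ j, e j ∈ suppIn (annu p₁ a b) := by
    intro j
    filter_upwards [indicatorConstLp_coeFn (p := 2) (hs := hAm j) (hμs := hAf j) (c := (1 : ℂ))]
      with x hx hxi
    rw [hx, indicator_of_notMem]
    exact fun h => hxi ⟨(hta _).trans h.1, h.2.trans_le (htb _)⟩
  have hne : ∀ j, e j ≠ 0 := by
    intro j h
    have h1 := congrArg norm h
    rw [norm_indicatorConstLp (by norm_num) (by norm_num), norm_zero] at h1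
    have : 0 < volume.real (A j) := ENNReal.toReal_pos (hA0 j) (hAf j)
    simp at h1
    have := Real.rpow_pos_of_pos this (1 / 2)
    norm_num at *
    linarith
  have hli : LinearIndependent ℂ e := linearIndependent_of_ne_zero_of_inner_eq_zero hne (by
    intro i j hij
    rcases lt_or_gt_of_ne hij with h | h
    · exact horth _ _ h
    · exact inner_eq_zero_symm.1 (horth _ _ h))
  have hli' : LinearIndependent ℂ (fun j => (⟨e j, hmem j⟩ : suppIn (annu p₁ a b))) :=
    LinearIndependent.of_comp (suppIn (annu p₁ a b)).subtype hli
  exact Set.infinite_univ (α := ℕ) (Set.finite_univ_iff.2 hli'.finite)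

lemma aux_ne (w₂ : Td d → Td d → Td d → ℝ)
    (hw₂ : Continuous fun x : Td d × Td d × Td d => w₂ x.1 x.2.1 x.2.2)
    (K : Td d) (z₁ : ℂ) (hz₁ : z₁ ∉ bigBand w₂ K) (p q : Td d) : (w₂ K p q : ℂ) - z₁ ≠ 0 := by
  have hc : Continuous fun x : Td d × Td d => w₂ K x.1 x.2 :=
    hw₂.comp (continuous_const.prodMk continuous_id)
  have hr := isCompact_range hc
  intro h
  exact hz₁ ⟨w₂ K p q, ⟨ciInf_le hr.bddBelow (p, q), le_ciSup hr.bddAbove (p, q)⟩, sub_eq_zero.1 h⟩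

/-- Existence of an orthonormal system `{cₙ}` in `L²(T^d)`, with `cₙ`
supported in the annulus `V_n(p₁) = {p : 1/(n+n'+1) < |p − p₁| < 1/(n+n')}`, such that the
double integrals `∫∫ v₁(p)v₁(q)cₙ(p)cₘ(q)/(w₂(K;p,q) − z₁)² dp dq` vanish for `n ≠ m`. -/
theorem exists_orthonormal_system
    (d : ℕ) (hd : 1 ≤ d)
    (v₁ : Td d → ℝ) (w₂ : Td d → Td d → Td d → ℝ)
    (hv₁ : Continuous v₁)
    (hw₂ : Continuous fun x : Td d × Td d × Td d => w₂ x.1 x.2.1 x.2.2)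
    (hsym : ∀ K p q : Td d, w₂ K p q = w₂ K q p)
    (K p₁ : Td d) (z₁ : ℂ) (hz₁ : z₁ ∉ bigBand w₂ K) (n' : ℕ) (hn' : 1 ≤ n') :
    ∃ c : ℕ → L2 d, Orthonormal ℂ c ∧
      (∀ n : ℕ, ∀ᵐ p ∂(volume : Measure (Td d)),
        p ∉ {p : Td d | 1 / (n + n' + 1 : ℝ) < dist p p₁ ∧ dist p p₁ < 1 / (n + n' : ℝ)} →
          c n p = 0) ∧
      ∀ n m : ℕ, n ≠ m →
        (∫ p in {p : Td d | 1 / (n + n' + 1 : ℝ) < dist p p₁ ∧ dist p p₁ < 1 / (n + n' : ℝ)},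
          ∫ q in {q : Td d | 1 / (m + n' + 1 : ℝ) < dist q p₁ ∧ dist q p₁ < 1 / (m + n' : ℝ)},
            (v₁ p : ℂ) * (v₁ q : ℂ) * c n p * c m q / ((w₂ K p q : ℂ) - z₁) ^ 2) = 0 := by
  have hkc : Continuous fun x : Td d × Td d =>
      (v₁ x.1 : ℂ) * (v₁ x.2 : ℂ) / ((w₂ K x.1 x.2 : ℂ) - z₁) ^ 2 := by
    have hc : Continuous fun x : Td d × Td d => w₂ K x.1 x.2 :=
      hw₂.comp (continuous_const.prodMk continuous_id)
    refine Continuous.div (by fun_prop) (by fun_prop) ?_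
    intro x
    exact pow_ne_zero _ (aux_ne w₂ hw₂ K z₁ hz₁ x.1 x.2)
  have hks : ∀ p q : Td d, (v₁ p : ℂ) * (v₁ q : ℂ) / ((w₂ K p q : ℂ) - z₁) ^ 2 =
      (v₁ q : ℂ) * (v₁ p : ℂ) / ((w₂ K q p : ℂ) - z₁) ^ 2 := by
    intro p q
    rw [hsym K p q, mul_comm (v₁ p : ℂ)]
  obtain ⟨B, hB⟩ := aux_bilin
    (fun p q : Td d => (v₁ p : ℂ) * (v₁ q : ℂ) / ((w₂ K p q : ℂ) - z₁) ^ 2) hkc hks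
  obtain ⟨c, hc1, hc2, hc3⟩ := aux_seq
    (fun n : ℕ => suppIn (annu p₁ (1 / (n + n' + 1 : ℝ)) (1 / (n + n' : ℝ))))
    (fun n => by
      have h1 : (1 : ℝ) ≤ n' := by exact_mod_cast hn'
      have h2 : (0 : ℝ) ≤ n := Nat.cast_nonneg n
      apply suppIn_inf hd
      · positivity
      · apply one_div_lt_one_div_of_lt <;> linarith
      · rw [div_le_one] <;> linarith)
    B (fun x y => by rw [hB, hB]; exact aux_symm _ hkc hks x y)
  refine ⟨c, hc1, hc2, ?_⟩
  intro n m hnm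
  rw [← hc3 n m hnm, hB, setIntegral_eq_integral_of_ae_compl_eq_zero]
  · congr 1; ext p
    rw [setIntegral_eq_integral_of_ae_compl_eq_zero]
    · congr 1; ext q
      ring
    · filter_upwards [hc2 m] with q hq hV
      rw [hq hV]; simp
  · filter_upwards [hc2 n] with p hp hV
    rw [hp hV]; simp
end
end

section
/- For every K ∈ T^d, the interval [m_K, M_K] is contained in the essential spectrum of H(K): [m_K, M_K] ⊆ σ_ess(H(K)). -/
open MeasureTheory Complex Filter Topology Set

noncomputable section

variable {d : ℕ}

lemma aux_swap_mem {d : ℕ} {S : Set (Td d × Td d)} (hS : MeasurableSet S)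
    (hsymS : Prod.swap ⁻¹' S = S) (c : ℂ) :
    indicatorConstLp 2 hS (measure_ne_top volume S) c ∈ symSub d := by
  have h : swapL d (indicatorConstLp 2 hS (measure_ne_top volume S) c)
      = indicatorConstLp 2 hS (measure_ne_top volume S) c := by
    refine (Lp.indicatorConstLp_compMeasurePreserving hS (measure_ne_top volume S) c
      MeasureTheory.Measure.measurePreserving_swap).trans ?_
    congr 1
  simp [symSub, LinearMap.mem_ker, sub_eq_zero, LinearMap.sub_apply, h]

/-- The normalizing constant. -/
def nrmC {d : ℕ} (S : Set (Td d × Td d)) : ℝ := (Real.sqrt (volume.real S))⁻¹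

/-- The normalized indicator vector. -/
def vec {d : ℕ} {S : Set (Td d × Td d)} (hS : MeasurableSet S)
    (hsymS : Prod.swap ⁻¹' S = S) : H3 d :=
  WithLp.toLp 2 (0, WithLp.toLp 2 (0,
    ⟨indicatorConstLp 2 hS (measure_ne_top volume S) (nrmC S : ℂ), aux_swap_mem hS hsymS _⟩))

lemma norm_ind {d : ℕ} {S : Set (Td d × Td d)} (hS : MeasurableSet S)
    (hpos : volume S ≠ 0) :
    ‖(indicatorConstLp 2 hS (measure_ne_top volume S) (nrmC S : ℂ) : L2two d)‖ = 1 := by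
  have h0 : 0 < volume.real S := ENNReal.toReal_pos hpos (measure_ne_top _ _)
  rw [norm_indicatorConstLp (by simp) (by simp)]
  have : (0:ℝ) < Real.sqrt (volume.real S) := Real.sqrt_pos.2 h0
  simp only [nrmC, Complex.norm_real, norm_inv, Real.norm_eq_abs, abs_of_pos this]
  rw [ENNReal.toReal_ofNat, ← Real.sqrt_eq_rpow]
  exact inv_mul_cancel₀ this.ne'

lemma vec_orthonormal {d : ℕ} {S : ℕ → Set (Td d × Td d)} (hS : ∀ n, MeasurableSet (S n))
    (hsymS : ∀ n, Prod.swap ⁻¹' (S n) = S n) (hpos : ∀ n, volume (S n) ≠ 0)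
    (hdisj : Pairwise fun i j => Disjoint (S i) (S j)) :
    Orthonormal ℂ (fun n => vec (hS n) (hsymS n)) := by
  constructor
  · intro n
    have h := WithLp.prod_norm_sq_eq_of_L2 (vec (hS n) (hsymS n))
    rw [WithLp.prod_norm_sq_eq_of_L2 (vec (hS n) (hsymS n)).snd] at h
    have h2 : ‖(vec (hS n) (hsymS n)).snd.snd‖ = 1 := norm_ind (hS n) (hpos n)
    have h1 : (vec (hS n) (hsymS n)).snd.fst = 0 := rfl
    have h3 : (vec (hS n) (hsymS n)).fst = 0 := rfl
    rw [h1, h2, h3] at h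
    simp at h
    rcases h with h | h
    · exact h
    · have := norm_nonneg (vec (hS n) (hsymS n)); linarith
  · intro i j hij
    rw [WithLp.prod_inner_apply, WithLp.prod_inner_apply]
    have : inner ℂ (indicatorConstLp 2 (hS i) (measure_ne_top volume (S i)) (nrmC (S i) : ℂ) : L2two d)
      (indicatorConstLp 2 (hS j) (measure_ne_top volume (S j)) (nrmC (S j) : ℂ) : L2two d) = 0 := by
      rw [L2.inner_indicatorConstLp_indicatorConstLp]
      simp [(hdisj hij).inter_eq]
    simp only [vec, Submodule.coe_inner, inner_zero_left, zero_add]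
    exact this

lemma vec_est {d : ℕ} (w₀ v₀ v₁ : Td d → ℝ) (w₁ : Td d → Td d → ℝ)
    (w₂ : Td d → Td d → Td d → ℝ) (K : Td d) (H : H3 d →L[ℂ] H3 d)
    (hH : IsHamiltonian w₀ v₀ v₁ w₁ w₂ K H)
    {S : Set (Td d × Td d)} (hS : MeasurableSet S)
    (hsymS : Prod.swap ⁻¹' S = S) (hpos : volume S ≠ 0)
    (l ε m V : ℝ) (hV : ∀ t, |v₁ t| ≤ V) (hm0 : 0 ≤ m)
    (hε : ∀ x ∈ S, |w₂ K x.1 x.2 - l| ≤ ε)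
    (hm : ∀ p, volume.real (Prod.mk p ⁻¹' S) ≤ m) :
    ‖H (vec hS hsymS) - (l : ℂ) • vec hS hsymS‖ ^ 2 ≤ V ^ 2 * m + ε ^ 2 := by
  set u := vec hS hsymS with hu
  set f : L2two d := indicatorConstLp 2 hS (measure_ne_top volume S) (nrmC S : ℂ) with hf
  have hp0 : p0 u = 0 := rfl
  have hp1 : p1 u = 0 := rfl
  have hp2 : p2 u = f := rfl
  have hfn : ‖f‖ = 1 := norm_ind hS hpos
  have hfi : ⇑f =ᵐ[volume] S.indicator fun _ => (nrmC S : ℂ) := indicatorConstLp_coeFn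
  have hS0 : 0 < volume.real S := ENNReal.toReal_pos hpos (measure_ne_top _ _)
  have hV0 : 0 ≤ V := (abs_nonneg _).trans (hV 0)
  have hc0 : 0 ≤ nrmC S := inv_nonneg.2 (Real.sqrt_nonneg _)
  have hc2 : nrmC S ^ 2 * volume.real S = 1 := by
    rw [nrmC, inv_pow, Real.sq_sqrt hS0.le]; exact inv_mul_cancel₀ hS0.ne'
  obtain ⟨h0, h1, h2⟩ := hH u
  rw [hp0, hp1] at h0
  rw [hp0, hp1, hp2] at h1
  rw [hp1, hp2] at h2
  have z : ⇑(0 : L2 d) =ᵐ[volume] 0 := Lp.coeFn_zero _ _ _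
  have h0' : p0 (H u) = 0 := by
    rw [h0, integral_eq_zero_of_ae]
    · simp
    · filter_upwards [z] with t ht
      simp [ht]
  have e0 : (H u - (l : ℂ) • u).fst = 0 := by
    have : (H u - (l : ℂ) • u).fst = p0 (H u) - (l : ℂ) * p0 u := rfl
    rw [this, h0', hp0]; simp
  have e1 : (H u - (l : ℂ) • u).snd.fst = p1 (H u) := by
    have : (H u - (l : ℂ) • u).snd.fst = p1 (H u) - (l : ℂ) • p1 u := rfl
    rw [this, hp1]; simp
  have e2 : ‖(H u - (l : ℂ) • u).snd.snd‖ = ‖p2 (H u) - (l : ℂ) • f‖ := rfl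
  -- two-particle part
  have b2 : ‖p2 (H u) - (l : ℂ) • f‖ ≤ ε * ‖f‖ := by
    apply Lp.norm_le_mul_norm_of_ae_le_mul
    have z1 : ∀ᵐ x : Td d × Td d, (0 : L2 d) x.1 = 0 :=
      Measure.quasiMeasurePreserving_fst.ae z
    have z2 : ∀ᵐ x : Td d × Td d, (0 : L2 d) x.2 = 0 :=
      Measure.quasiMeasurePreserving_snd.ae z
    filter_upwards [z1, z2, h2, hfi, Lp.coeFn_sub (p2 (H u)) ((l : ℂ) • f),
      Lp.coeFn_smul (l : ℂ) f] with x a1 a2 a3 a4 a5 a6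
    rw [a5, Pi.sub_apply, a6, a3, a1, a2, Pi.smul_apply]
    simp only [mul_zero, add_zero, zero_div, zero_add, smul_eq_mul]
    rw [← sub_mul, norm_mul]
    by_cases hx : x ∈ S
    · gcongr
      rw [← Complex.ofReal_sub, Complex.norm_real]
      exact hε x hx
    · rw [a4]; simp [hx]
  have b1 : ‖p1 (H u)‖ ^ 2 ≤ V ^ 2 * m := by
    have hae : ∀ᵐ p : Td d, ‖p1 (H u) p‖ ≤ V * nrmC S * volume.real (Prod.mk p ⁻¹' S) := by
      have hfi' : ∀ᵐ p : Td d, ∀ᵐ t : Td d, f (p, t) = S.indicator (fun _ => (nrmC S : ℂ)) (p, t) :=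
        Measure.ae_ae_of_ae_prod hfi
      filter_upwards [h1, z, hfi'] with p a1 a2 a3
      rw [a1, a2]
      simp only [mul_zero, zero_add, Pi.zero_apply]
      have hms : MeasurableSet (Prod.mk p ⁻¹' S) := hS.preimage measurable_prodMk_left
      calc ‖∫ t, (v₁ t : ℂ) * f (p, t)‖
          ≤ ∫ t, (Prod.mk p ⁻¹' S).indicator (fun _ => V * nrmC S) t := by
            apply norm_integral_le_of_norm_le
            · exact (integrable_const _).indicator hms
            · filter_upwards [a3] with t ht
              rw [ht]
              by_cases hx : (p, t) ∈ S
              · have hx' : t ∈ Prod.mk p ⁻¹' S := hx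
                rw [indicator_of_mem hx, indicator_of_mem hx', norm_mul, Complex.norm_real,
                  Complex.norm_real, Real.norm_of_nonneg hc0]
                gcongr
                exact hV t
              · have hx' : t ∉ Prod.mk p ⁻¹' S := hx
                rw [indicator_of_notMem hx, indicator_of_notMem hx']
                simp
        _ = _ := by
            rw [integral_indicator_const _ hms, smul_eq_mul, mul_comm]
    have hint : Integrable (fun p : Td d => volume.real (Prod.mk p ⁻¹' S)) :=
      Measure.integrable_measure_prodMk_left hS (measure_ne_top _ _)
    have hprod : ∫ p : Td d, volume.real (Prod.mk p ⁻¹' S) = volume.real S := by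
      rw [show (volume : Measure (Td d × Td d)) = (volume : Measure (Td d)).prod volume from rfl]
      rw [measureReal_def, Measure.prod_apply hS, ← integral_toReal]
      · rfl
      · exact (measurable_measure_prodMk_left hS).aemeasurable
      · exact Eventually.of_forall fun p => measure_lt_top _ _
    have hn : ‖p1 (H u)‖ ^ 2 = ∫ p, ‖p1 (H u) p‖ ^ 2 := by
      have := L2.inner_def (𝕜 := ℂ) (p1 (H u)) (p1 (H u))
      rw [inner_self_eq_norm_sq_to_K] at this
      have h' : ∀ p, inner ℂ (p1 (H u) p) (p1 (H u) p) = ((‖p1 (H u) p‖ ^ 2 : ℝ) : ℂ) := by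
        intro p; rw [inner_self_eq_norm_sq_to_K]; push_cast; rfl
      simp only [h'] at this
      rw [integral_complex_ofReal] at this
      exact Complex.ofReal_injective (by rw [Complex.ofReal_pow]; exact this)
    rw [hn]
    calc ∫ p, ‖p1 (H u) p‖ ^ 2
        ≤ ∫ p : Td d, (V ^ 2 * nrmC S ^ 2 * m) * volume.real (Prod.mk p ⁻¹' S) := by
          apply integral_mono_of_nonneg
          · exact Eventually.of_forall fun p => by positivity
          · exact hint.const_mul _
          · filter_upwards [hae] with p hp
            have h3 := hm p
            have h4 : 0 ≤ volume.real (Prod.mk p ⁻¹' S) := measureReal_nonneg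
            calc ‖p1 (H u) p‖ ^ 2 ≤ (V * nrmC S * volume.real (Prod.mk p ⁻¹' S)) ^ 2 := by gcongr
              _ = V ^ 2 * nrmC S ^ 2 * volume.real (Prod.mk p ⁻¹' S) * volume.real (Prod.mk p ⁻¹' S) := by ring
              _ ≤ _ := by gcongr
      _ = V ^ 2 * m * (nrmC S ^ 2 * volume.real S) := by
          rw [integral_const_mul, hprod]; ring
      _ = _ := by rw [hc2, mul_one]
  rw [WithLp.prod_norm_sq_eq_of_L2, WithLp.prod_norm_sq_eq_of_L2, e0, e1, e2]
  rw [hfn, mul_one] at b2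
  have : ‖p2 (H u) - (l : ℂ) • f‖ ^ 2 ≤ ε ^ 2 := by gcongr
  simp only [norm_zero]
  linarith

/-- Symmetric neighbourhoods of `{(a,b),(b,a)}`. -/
def nbW {d : ℕ} (a b : Td d) (n : ℕ) : Set (Td d × Td d) :=
  Metric.ball a (1 / ((n : ℝ) + 1)) ×ˢ Metric.ball b (1 / ((n : ℝ) + 1)) ∪
  Metric.ball b (1 / ((n : ℝ) + 1)) ×ˢ Metric.ball a (1 / ((n : ℝ) + 1))

lemma nbW_open {d : ℕ} (a b : Td d) (n : ℕ) : IsOpen (nbW a b n) :=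
  (Metric.isOpen_ball.prod Metric.isOpen_ball).union (Metric.isOpen_ball.prod Metric.isOpen_ball)

lemma nbW_swap {d : ℕ} (a b : Td d) (n : ℕ) : Prod.swap ⁻¹' (nbW a b n) = nbW a b n := by
  ext ⟨x, y⟩; simp only [nbW, mem_preimage, mem_union, mem_prod, Prod.swap_prod_mk]; tauto

lemma nbW_anti {d : ℕ} (a b : Td d) : Antitone (nbW a b) := by
  intro m n h
  have : 1 / ((n : ℝ) + 1) ≤ 1 / ((m : ℝ) + 1) := Nat.one_div_le_one_div h
  have A := Metric.ball_subset_ball (x := a) this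
  have B := Metric.ball_subset_ball (x := b) this
  exact union_subset_union (prod_mono A B) (prod_mono B A)

lemma nbW_pos {d : ℕ} (a b : Td d) (n : ℕ) : 0 < volume (nbW a b n) := by
  refine (nbW_open a b n).measure_pos volume ?_
  refine ⟨(a, b), Or.inl ⟨?_, ?_⟩⟩ <;> exact Metric.mem_ball_self Nat.one_div_pos_of_nat

lemma ball_tendsto {d : ℕ} (hd : 1 ≤ d) (a : Td d) :
    Tendsto (fun n : ℕ => volume.real (Metric.ball a (1 / ((n : ℝ) + 1)))) atTop (𝓝 0) := by
  haveI : Nonempty (Fin d) := ⟨⟨0, hd⟩⟩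
  haveI : NullSingletonClass (volume : Measure (AddCircle (2 * Real.pi))) := by
    refine ⟨fun x => ?_⟩
    rw [← Metric.closedBall_zero, AddCircle.volume_closedBall]
    simp [Real.pi_pos.le]
  have h1 : Tendsto (fun n : ℕ => volume (Metric.ball a (1 / ((n : ℝ) + 1)))) atTop
      (𝓝 (volume (⋂ n : ℕ, Metric.ball a (1 / ((n : ℝ) + 1))))) := by
    apply tendsto_measure_iInter_atTop
    · intro n; exact measurableSet_ball.nullMeasurableSet
    · intro m n h
      exact Metric.ball_subset_ball (Nat.one_div_le_one_div h)
    · exact ⟨0, measure_ne_top _ _⟩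
  have h2 : (⋂ n : ℕ, Metric.ball a (1 / ((n : ℝ) + 1))) ⊆ {a} := by
    intro x hx
    simp only [mem_iInter, Metric.mem_ball] at hx
    by_contra hne
    obtain ⟨n, hn⟩ := exists_nat_one_div_lt (dist_pos.2 hne)
    exact absurd (hx n) (not_lt.2 hn.le)
  rw [measure_mono_null h2 (measure_singleton a)] at h1
  exact (ENNReal.tendsto_toReal ENNReal.zero_ne_top).comp h1

lemma nbW_slice {d : ℕ} (a b : Td d) (n : ℕ) (p : Td d) :
    volume.real (Prod.mk p ⁻¹' nbW a b n) ≤ volume.real (Metric.ball a (1 / ((n : ℝ) + 1))) +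
      volume.real (Metric.ball b (1 / ((n : ℝ) + 1))) := by
  refine le_trans (measureReal_mono ?_) (measureReal_union_le _ _)
  rintro t (h | h)
  · exact Or.inr h.2
  · exact Or.inl h.2

lemma nbW_tendsto {d : ℕ} (hd : 1 ≤ d) (a b : Td d) :
    Tendsto (fun n => volume.real (nbW a b n)) atTop (𝓝 0) := by
  have h : ∀ n, volume.real (nbW a b n) ≤
      2 * (volume.real (Metric.ball a (1 / ((n : ℝ) + 1))) *
      volume.real (Metric.ball b (1 / ((n : ℝ) + 1)))) := by
    intro n
    refine (measureReal_union_le _ _).trans (le_of_eq ?_)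
    rw [show (volume : Measure (Td d × Td d)) = (volume : Measure (Td d)).prod volume from rfl]
    rw [measureReal_prod_prod, measureReal_prod_prod]; ring
  refine squeeze_zero (fun n => measureReal_nonneg) h ?_
  simpa using ((ball_tendsto hd a).mul (ball_tendsto hd b)).const_mul 2

/-- For every `K ∈ T^d`, `[m_K, M_K] ⊆ σ_ess(H(K))`. -/
theorem bigBand_subset_essSpec
    (d : ℕ) (hd : 1 ≤ d)
    (w₀ v₀ v₁ : Td d → ℝ) (w₁ : Td d → Td d → ℝ) (w₂ : Td d → Td d → Td d → ℝ)
    (hw₀ : Continuous w₀) (hv₀ : Continuous v₀) (hv₁ : Continuous v₁)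
    (hw₁ : Continuous fun x : Td d × Td d => w₁ x.1 x.2)
    (hw₂ : Continuous fun x : Td d × Td d × Td d => w₂ x.1 x.2.1 x.2.2)
    (hsym : ∀ K p q : Td d, w₂ K p q = w₂ K q p)
    (K : Td d) (H : H3 d →L[ℂ] H3 d)
    (hH : IsHamiltonian w₀ v₀ v₁ w₁ w₂ K H) :
    bigBand w₂ K ⊆ essSpec H := by
  rintro _ ⟨l, ⟨hl1, hl2⟩, rfl⟩
  have hwK : Continuous fun x : Td d × Td d => w₂ K x.1 x.2 :=
    hw₂.comp (continuous_const.prodMk continuous_id)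
  obtain ⟨xm, -, hxm⟩ := isCompact_univ.exists_isMinOn univ_nonempty hwK.continuousOn
  obtain ⟨xM, -, hxM⟩ := isCompact_univ.exists_isMaxOn univ_nonempty hwK.continuousOn
  have hm : w₂ K xm.1 xm.2 ≤ l := le_trans (le_ciInf fun x => hxm (mem_univ x)) hl1
  have hM : l ≤ w₂ K xM.1 xM.2 := le_trans hl2 (ciSup_le fun x => hxM (mem_univ x))
  obtain ⟨⟨a, b⟩, hab⟩ : ∃ x : Td d × Td d, w₂ K x.1 x.2 = l :=
    mem_range_of_exists_le_of_exists_ge hwK ⟨xm, hm⟩ ⟨xM, hM⟩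
  obtain ⟨V, hV⟩ : ∃ V, ∀ t, |v₁ t| ≤ V := by
    obtain ⟨V, hV⟩ := isCompact_univ.exists_bound_of_continuousOn hv₁.continuousOn
    exact ⟨V, fun t => hV t (mem_univ t)⟩
  -- strictly shrinking subsequence
  have hg : ∀ k, ∃ j, k < j ∧ volume.real (nbW a b j) < volume.real (nbW a b k) := by
    intro k
    have hk : 0 < volume.real (nbW a b k) :=
      ENNReal.toReal_pos (nbW_pos a b k).ne' (measure_ne_top _ _)
    exact ((eventually_gt_atTop k).and ((nbW_tendsto hd a b).eventually_lt_const hk)).exists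
  choose g hg1 hg2 using hg
  let φ : ℕ → ℕ := fun n => g^[n] 0
  have hφs : ∀ n, φ (n + 1) = g (φ n) := fun n => Function.iterate_succ_apply' g n 0
  have hφ : StrictMono φ := strictMono_nat_of_lt_succ fun n => by rw [hφs]; exact hg1 _
  let S : ℕ → Set (Td d × Td d) := fun n => nbW a b (φ n) \ nbW a b (φ (n + 1))
  have hS : ∀ n, MeasurableSet (S n) := fun n =>
    (nbW_open a b _).measurableSet.diff (nbW_open a b _).measurableSet
  have hsymS : ∀ n, Prod.swap ⁻¹' (S n) = S n := fun n => by
    simp only [S, preimage_diff, nbW_swap]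
  have hpos : ∀ n, volume (S n) ≠ 0 := by
    intro n h0
    have h1 : volume (nbW a b (φ n)) ≤ volume (nbW a b (φ (n + 1))) := by
      exact measure_mono_ae (ae_le_set.2 h0)
    have h2 := hg2 (φ n)
    rw [← hφs] at h2
    exact absurd (ENNReal.toReal_mono (measure_ne_top _ _) h1) (not_le.2 h2)
  have hlt : ∀ i j, i < j → Disjoint (S i) (S j) := by
    intro i j hij
    rw [Set.disjoint_left]
    intro x hx hx'
    exact hx.2 (nbW_anti a b (hφ.monotone hij) hx'.1)
  have hdisj : Pairwise fun i j => Disjoint (S i) (S j) := by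
    intro i j hij
    rcases lt_or_gt_of_ne hij with h | h
    · exact hlt i j h
    · exact (hlt j i h).symm
  refine ⟨fun n => vec (hS n) (hsymS n), vec_orthonormal hS hsymS hpos hdisj, ?_⟩
  let mm : ℕ → ℝ := fun n => volume.real (Metric.ball a (1 / ((n : ℝ) + 1))) +
      volume.real (Metric.ball b (1 / ((n : ℝ) + 1)))
  have hmm : Tendsto (fun n => mm (φ n)) atTop (𝓝 0) := by
    have := (ball_tendsto hd a).add (ball_tendsto hd b)
    rw [add_zero] at this
    exact this.comp hφ.tendsto_atTop
  have hw : ∀ ε > 0, ∀ᶠ n in atTop, ∀ x ∈ nbW a b n, |w₂ K x.1 x.2 - l| ≤ ε := by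
    intro ε hε
    obtain ⟨δ, hδ, h⟩ := Metric.continuousAt_iff.1 (hwK.continuousAt (x := (a, b))) ε hε
    obtain ⟨N, hN⟩ := exists_nat_one_div_lt hδ
    filter_upwards [eventually_ge_atTop N] with n hn
    have hn' : 1 / ((n : ℝ) + 1) < δ := (Nat.one_div_le_one_div hn).trans_lt hN
    have key : ∀ p q : Td d, dist p a < 1 / ((n : ℝ) + 1) → dist q b < 1 / ((n : ℝ) + 1) →
        |w₂ K p q - l| ≤ ε := by
      intro p q hp hq
      have := @h (p, q) (by rw [Prod.dist_eq]; exact max_lt (hp.trans hn') (hq.trans hn'))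
      simp only at hab this
      rw [hab, Real.dist_eq] at this
      exact this.le
    rintro ⟨p, q⟩ (⟨hp, hq⟩ | ⟨hp, hq⟩)
    · exact key p q hp hq
    · have := key q p hq hp
      rwa [hsym] at this
  have hsq : Tendsto (fun n => ‖H (vec (hS n) (hsymS n)) - (l : ℂ) • vec (hS n) (hsymS n)‖ ^ 2)
      atTop (𝓝 0) := by
    rw [Metric.tendsto_atTop']
    intro η hη
    have hη2 : 0 < Real.sqrt (η / 2) := Real.sqrt_pos.2 (by positivity)
    have hA : ∀ᶠ n in atTop, V ^ 2 * mm (φ n) < η / 2 := by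
      have := hmm.const_mul (V ^ 2)
      rw [mul_zero] at this
      exact this.eventually_lt_const (by positivity)
    have hB := hφ.tendsto_atTop.eventually (hw _ hη2)
    obtain ⟨N, hN⟩ := eventually_atTop.1 (hA.and hB)
    refine ⟨N, fun n hn => ?_⟩
    obtain ⟨h1, h2⟩ := hN n hn.le
    have h3 := vec_est w₀ v₀ v₁ w₁ w₂ K H hH (hS n) (hsymS n) (hpos n) l (Real.sqrt (η / 2))
      (mm (φ n)) V hV (add_nonneg measureReal_nonneg measureReal_nonneg) (fun x hx => h2 x hx.1)
      (fun p => (measureReal_mono (preimage_mono diff_subset)).trans (nbW_slice a b (φ n) p))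
    rw [Real.sq_sqrt (by positivity)] at h3
    rw [Real.dist_eq, sub_zero, abs_of_nonneg (by positivity)]
    linarith
  have := hsq.sqrt
  simpa using this
end
end

section
/- For every K ∈ T^d, the two-particle branch Λ_K is contained in the essential spectrum of H(K): Λ_K ⊆ σ_ess(H(K)). -/
open MeasureTheory Complex Filter Topology Set

noncomputable section

variable {d : ℕ}

lemma essSpec_of_subspaces {E : Type*} [NormedAddCommGroup E] [InnerProductSpace ℂ E]
    (A : E →L[ℂ] E) (l : ℂ)
    (h : ∀ ε > 0, ∃ W : Submodule ℂ E, ¬ FiniteDimensional ℂ W ∧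
      ∀ u ∈ W, ‖A u - l • u‖ ≤ ε * ‖u‖) : l ∈ essSpec A := by
  have key := exists_seq_of_forall_finset_exists (α := ℕ × E)
    (fun x => ‖x.2‖ = 1 ∧ ‖A x.2 - l • x.2‖ ≤ 1 / ((x.1 : ℝ) + 1))
    (fun x y => x.1 < y.1 ∧ inner ℂ x.2 y.2 = 0) ?_
  · obtain ⟨f, hf, hr⟩ := key
    have hmono : StrictMono (fun n => (f n).1) := fun m n hmn => (hr m n hmn).1
    refine ⟨fun n => (f n).2, ⟨fun n => (hf n).1, ?_⟩, ?_⟩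
    · intro i j hij
      rcases lt_or_gt_of_ne hij with h1 | h1
      · exact (hr _ _ h1).2
      · exact inner_eq_zero_symm.1 (hr _ _ h1).2
    · refine squeeze_zero (fun _ => norm_nonneg _) (fun n => ?_)
        tendsto_one_div_add_atTop_nhds_zero_nat
      refine (hf n).2.trans ?_
      have : n ≤ (f n).1 := hmono.id_le n
      have : (n : ℝ) ≤ (f n).1 := by exact_mod_cast this
      gcongr
  · intro s _
    set N := s.sup Prod.fst + 1 with hN
    obtain ⟨W, hW, hWb⟩ := h (1 / ((N : ℝ) + 1)) (by positivity)
    let L : W →ₗ[ℂ] (s → ℂ) :=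
      LinearMap.pi fun x => (innerₛₗ ℂ x.1.2) ∘ₗ W.subtype
    have hL : ¬ Function.Injective L := fun hi => hW (FiniteDimensional.of_injective L hi)
    have : ∃ w : W, L w = 0 ∧ w ≠ 0 := by
      by_contra! hc
      exact hL ((injective_iff_map_eq_zero L).2 hc)
    obtain ⟨w, hw0, hw⟩ := this
    have hwn : (w : E) ≠ 0 := by simpa using hw
    have hu : ‖((‖(w : E)‖⁻¹ : ℝ) : ℂ) • (w : E)‖ = 1 := by
      rw [norm_smul]; simp [hwn]
    refine ⟨(N, ((‖(w : E)‖⁻¹ : ℝ) : ℂ) • (w : E)), ⟨hu, ?_⟩, ?_⟩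
    · have := hWb _ (W.smul_mem ((‖(w : E)‖⁻¹ : ℝ) : ℂ) w.2)
      rw [hu, mul_one] at this
      exact this
    · intro x hx
      refine ⟨?_, ?_⟩
      · have : x.1 ≤ s.sup Prod.fst := Finset.le_sup (f := Prod.fst) hx
        simp only [hN]; omega
      · have := congrFun hw0 ⟨x, hx⟩
        simp only [L, LinearMap.pi_apply, LinearMap.comp_apply] at this
        rw [inner_smul_right]
        have h2 : inner ℂ x.2 (w : E) = 0 := this
        rw [h2, mul_zero]

lemma nsc (d : ℕ) (hd : 1 ≤ d) : NullSingletonClass (volume : Measure (Td d)) := by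
  have : NullSingletonClass (volume : Measure (AddCircle (2 * Real.pi))) := by
    refine ⟨fun x => ?_⟩
    rw [← Metric.closedBall_zero, AddCircle.volume_closedBall]
    simp [Real.pi_pos.le]
  exact Measure.pi_nullSingletonClass (⟨0, hd⟩ : Fin d)

lemma cs_bound (f : L2 d) (U : Set (Td d)) (hU : MeasurableSet U)
    (hf : ∀ᵐ p : Td d, p ∉ U → f p = 0) :
    ∫ p, ‖f p‖ ≤ ‖f‖ * ((volume U) ^ (1 / 2 : ℝ)).toReal := by
  have h1 : ∫ p, ‖f p‖ = ∫ p in U, ‖f p‖ := by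
    rw [← integral_indicator hU]
    refine integral_congr_ae ?_
    filter_upwards [hf] with p hp
    by_cases h : p ∈ U
    · simp [h]
    · simp [h, hp h]
  have hm : AEStronglyMeasurable f (volume.restrict U) := (Lp.aestronglyMeasurable f).restrict
  rw [h1, integral_norm_eq_lintegral_enorm hm, ← eLpNorm_one_eq_lintegral_enorm, Lp.norm_def,
    ← ENNReal.toReal_mul]
  have h2 := eLpNorm_le_eLpNorm_mul_rpow_measure_univ (p := 1) (q := 2) (by norm_num) hm
  refine ENNReal.toReal_mono ?_ (h2.trans ?_)
  · refine ENNReal.mul_ne_top (Lp.eLpNorm_ne_top f) ?_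
    exact ENNReal.rpow_ne_top_of_nonneg (by norm_num) (measure_ne_top _ _)
  · have : (1 / (1:ENNReal).toReal - 1 / (2:ENNReal).toReal) = (1/2 : ℝ) := by norm_num
    rw [this, Measure.restrict_apply_univ]
    gcongr
    exact Measure.restrict_le_self

lemma l2_bound (g f : L2 d) (ε c : ℝ) (hε : 0 ≤ ε) (hc : 0 ≤ c)
    (h : ∀ᵐ p : Td d, ‖g p‖ ≤ ε * ‖f p‖ + c) :
    ‖g‖ ≤ ε * ‖f‖ + c * (((volume (univ : Set (Td d))) ^ (1 / 2 : ℝ)).toReal) := by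
  have hm : MemLp (fun p => ‖f p‖) 2 (volume : Measure (Td d)) := (Lp.memLp f).norm
  let F : Lp ℝ 2 (volume : Measure (Td d)) := hm.toLp
  let G : Lp ℝ 2 (volume : Measure (Td d)) := (memLp_const c).toLp (fun _ => c)
  have hF : ‖F‖ = ‖f‖ := by
    rw [Lp.norm_toLp, eLpNorm_norm, Lp.norm_def]
  have hG : ‖G‖ = c * (((volume (univ : Set (Td d))) ^ (1 / 2 : ℝ)).toReal) := by
    simp only [G, Lp.norm_toLp]
    rw [eLpNorm_const' _ (by norm_num) (by norm_num), ENNReal.toReal_mul]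
    simp [hc]
  have h1 : ‖g‖ ≤ ‖ε • F + G‖ := by
    refine Lp.norm_le_norm_of_ae_le ?_
    filter_upwards [h, Lp.coeFn_add (ε • F) G, Lp.coeFn_smul ε F, hm.coeFn_toLp,
      (memLp_const c : MemLp (fun _ : Td d => c) 2 volume).coeFn_toLp] with p hp h1 h2 h3 h4
    rw [h1, Pi.add_apply, h2, Pi.smul_apply, h3, h4, smul_eq_mul]
    exact hp.trans (le_abs_self _)
  refine h1.trans ((norm_add_le _ _).trans ?_)
  rw [hG, norm_smul, hF, Real.norm_of_nonneg hε]

lemma h3_norm_le (f : H3 d) : ‖f‖ ≤ ‖p0 f‖ + ‖p1 f‖ + ‖p2 f‖ := by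
  have h1 := WithLp.prod_norm_sq_eq_of_L2 f
  have h2 := WithLp.prod_norm_sq_eq_of_L2 f.snd
  have e0 : ‖p0 f‖ = ‖f.fst‖ := rfl
  have e1 : ‖p1 f‖ = ‖f.snd.fst‖ := rfl
  have e2 : ‖p2 f‖ = ‖f.snd.snd‖ := rfl
  rw [e0, e1, e2]
  have a0 := norm_nonneg f.fst
  have a1 := norm_nonneg f.snd.fst
  have a2 := norm_nonneg f.snd.snd
  refine abs_le_of_sq_le_sq' ?_ (by positivity) |>.2
  nlinarith [mul_nonneg a0 a1, mul_nonneg a0 a2, mul_nonneg a1 a2]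

lemma p1_norm_le (f : H3 d) : ‖p1 f‖ ≤ ‖f‖ := by
  have h1 := WithLp.prod_norm_sq_eq_of_L2 f
  have h2 := WithLp.prod_norm_sq_eq_of_L2 f.snd
  have e1 : ‖p1 f‖ = ‖f.snd.fst‖ := rfl
  rw [e1]
  refine abs_le_of_sq_le_sq' ?_ (by positivity) |>.2
  nlinarith [sq_nonneg ‖f.fst‖, sq_nonneg ‖f.snd.snd‖]

lemma p0_add (f g : H3 d) : p0 (f + g) = p0 f + p0 g := rfl
lemma p1_add (f g : H3 d) : p1 (f + g) = p1 f + p1 g := rfl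
lemma p2_add (f g : H3 d) : p2 (f + g) = p2 f + p2 g := rfl
lemma p0_sub (f g : H3 d) : p0 (f - g) = p0 f - p0 g := rfl
lemma p1_sub (f g : H3 d) : p1 (f - g) = p1 f - p1 g := rfl
lemma p2_sub (f g : H3 d) : p2 (f - g) = p2 f - p2 g := rfl
lemma p0_smul (c : ℂ) (g : H3 d) : p0 (c • g) = c * p0 g := rfl
lemma p1_smul (c : ℂ) (g : H3 d) : p1 (c • g) = c • p1 g := rfl
lemma p2_smul (c : ℂ) (g : H3 d) : p2 (c • g) = c • p2 g := rfl

def P1 (d : ℕ) : H3 d →ₗ[ℂ] L2 d where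
  toFun := p1
  map_add' := p1_add
  map_smul' := p1_smul

lemma ae_fst {P : Td d → Prop} (h : ∀ᵐ p, P p) : ∀ᵐ x : Td d × Td d, P x.1 :=
  Measure.quasiMeasurePreserving_fst.ae h
lemma ae_snd {P : Td d → Prop} (h : ∀ᵐ p, P p) : ∀ᵐ x : Td d × Td d, P x.2 :=
  Measure.quasiMeasurePreserving_snd.ae h

def Wsub (v : Td d → ℝ) (r : Td d × Td d → ℂ) (U : Set (Td d)) : Submodule ℂ (H3 d) where
  carrier := {f | p0 f = 0 ∧ (∀ᵐ p, p ∉ U → p1 f p = 0) ∧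
    ∀ᵐ x : Td d × Td d, p2 f x =
      -(((v x.1 : ℂ) * p1 f x.2 + (v x.2 : ℂ) * p1 f x.1) / 2) * r x}
  zero_mem' := by
    have e1 : p1 (0 : H3 d) = 0 := rfl
    have e2 : p2 (0 : H3 d) = 0 := rfl
    have z1 := Lp.coeFn_zero ℂ 2 (volume : Measure (Td d))
    have z2 := Lp.coeFn_zero ℂ 2 (volume : Measure (Td d × Td d))
    refine ⟨rfl, ?_, ?_⟩
    · rw [e1]
      filter_upwards [z1] with p hp _
      rw [hp]; rfl
    · rw [e1, e2]
      filter_upwards [z2, ae_fst z1, ae_snd z1] with x h h1 h2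
      rw [h, h1, h2]; simp
  add_mem' := by
    rintro f g ⟨f0, f1, f2⟩ ⟨g0, g1, g2⟩
    have z1 := Lp.coeFn_add (p1 f) (p1 g)
    have z2 := Lp.coeFn_add (p2 f) (p2 g)
    refine ⟨by rw [p0_add, f0, g0, add_zero], ?_, ?_⟩
    · rw [p1_add]
      filter_upwards [z1, f1, g1] with p hp h1 h2 h
      rw [hp, Pi.add_apply, h1 h, h2 h, add_zero]
    · rw [p1_add, p2_add]
      filter_upwards [z2, ae_fst z1, ae_snd z1, f2, g2] with x h h1 h2 h3 h4
      rw [h, h1, h2]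
      simp only [Pi.add_apply]
      rw [h3, h4]; ring
  smul_mem' := by
    rintro c f ⟨f0, f1, f2⟩
    have z1 := Lp.coeFn_smul c (p1 f)
    have z2 := Lp.coeFn_smul c (p2 f)
    refine ⟨by rw [p0_smul, f0, mul_zero], ?_, ?_⟩
    · rw [p1_smul]
      filter_upwards [z1, f1] with p hp h1 h
      rw [hp, Pi.smul_apply, h1 h, smul_zero]
    · rw [p1_smul, p2_smul]
      filter_upwards [z2, ae_fst z1, ae_snd z1, f2] with x h h1 h2 h3
      rw [h, h1, h2]
      simp only [Pi.smul_apply, smul_eq_mul]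
      rw [h3]; ring

lemma exists_mem_Wsub (v : Td d → ℝ) (r : Td d × Td d → ℂ) (U A : Set (Td d))
    (hA : MeasurableSet A) (hAU : A ⊆ U) (hv : Measurable v) (hr : Measurable r)
    (C R : ℝ) (hC : ∀ p, ‖v p‖ ≤ C) (hR0 : 0 ≤ R)
    (hR : ∀ x : Td d × Td d, x.1 ∈ U ∨ x.2 ∈ U → ‖r x‖ ≤ R)
    (hs : ∀ x : Td d × Td d, r x.swap = r x) :
    ∃ f ∈ Wsub v r U, p1 f = indicatorConstLp 2 hA (measure_ne_top volume A) (1 : ℂ) := by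
  let i : Td d → ℂ := A.indicator fun _ => 1
  have hi : Measurable i := measurable_const.indicator hA
  let g : Td d × Td d → ℂ := fun x =>
    -(((v x.1 : ℂ) * i x.2 + (v x.2 : ℂ) * i x.1) / 2) * r x
  have hg : Measurable g := by
    have hvc : Measurable fun p => (v p : ℂ) := Complex.measurable_ofReal.comp hv
    have mfst : Measurable (Prod.fst : Td d × Td d → Td d) := measurable_fst
    have msnd : Measurable (Prod.snd : Td d × Td d → Td d) := measurable_snd
    have a1 := hvc.comp mfst
    have a2 := hvc.comp msnd
    have b1 := hi.comp mfst
    have b2 := hi.comp msnd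
    exact (((a1.mul b2).add (a2.mul b1)).div_const 2).neg.mul hr
  have hi1 : ∀ p, ‖i p‖ ≤ 1 := by
    intro p
    by_cases h : p ∈ A <;> simp [i, h]
  have hi0 : ∀ p, p ∉ U → i p = 0 := by
    intro p hp
    have : p ∉ A := fun h => hp (hAU h)
    simp [i, this]
  have hC0 : ∀ p, 0 ≤ C := fun p => (norm_nonneg _).trans (hC p)
  have hgb : ∀ x, ‖g x‖ ≤ C * R := by
    intro x
    by_cases h : x.1 ∈ U ∨ x.2 ∈ U
    · simp only [g]
      rw [norm_mul, norm_neg]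
      have hc := hC0 x.1
      refine mul_le_mul ?_ (hR x h) (norm_nonneg _) hc
      rw [norm_div]
      have h1 : ‖(v x.1 : ℂ) * i x.2‖ ≤ C * 1 := by
        rw [norm_mul]
        refine mul_le_mul ?_ (hi1 _) (norm_nonneg _) hc
        simpa using hC x.1
      have h2 : ‖(v x.2 : ℂ) * i x.1‖ ≤ C * 1 := by
        rw [norm_mul]
        refine mul_le_mul ?_ (hi1 _) (norm_nonneg _) hc
        simpa using hC x.2
      have h3 := norm_add_le ((v x.1 : ℂ) * i x.2) ((v x.2 : ℂ) * i x.1)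
      have h4 : ‖(2:ℂ)‖ = 2 := by norm_num
      rw [h4]
      linarith
    · push Not at h
      have hc := hC0 x.1
      have : g x = 0 := by simp [g, hi0 _ h.1, hi0 _ h.2]
      rw [this, norm_zero]; positivity
  have hgm : MemLp g 2 (volume : Measure (Td d × Td d)) :=
    MemLp.of_bound hg.aestronglyMeasurable (C * R) (Eventually.of_forall hgb)
  have hgs : hgm.toLp g ∈ symSub d := by
    rw [symSub, LinearMap.mem_ker, LinearMap.sub_apply, sub_eq_zero]
    have hmp : MeasurePreserving (Prod.swap : Td d × Td d → Td d × Td d) volume volume :=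
      MeasureTheory.Measure.measurePreserving_swap
    change Lp.compMeasurePreserving Prod.swap hmp (hgm.toLp g) = hgm.toLp g
    refine Lp.ext ?_
    filter_upwards [Lp.coeFn_compMeasurePreserving (hgm.toLp g) hmp, hgm.coeFn_toLp,
      hmp.quasiMeasurePreserving.ae hgm.coeFn_toLp] with x h1 h2 h3
    rw [h1, Function.comp_apply, h3, h2]
    simp only [g, hs]
    simp only [Prod.fst_swap, Prod.snd_swap]
    ring
  let f : H3 d := WithLp.toLp 2 (0, WithLp.toLp 2
    (indicatorConstLp 2 hA (measure_ne_top volume A) (1 : ℂ), ⟨hgm.toLp g, hgs⟩))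
  have e1 : p1 f = indicatorConstLp 2 hA (measure_ne_top volume A) (1 : ℂ) := rfl
  have e2 : p2 f = hgm.toLp g := rfl
  have hind : ∀ᵐ p, p1 f p = i p := by rw [e1]; exact indicatorConstLp_coeFn
  refine ⟨f, ⟨rfl, ?_, ?_⟩, e1⟩
  · filter_upwards [hind] with p hp h
    rw [hp, hi0 p h]
  · filter_upwards [ae_fst hind, ae_snd hind, hgm.coeFn_toLp] with x h1 h2 h3
    rw [h1, h2, e2, h3]

lemma Wsub_inf (hd : 1 ≤ d) (v : Td d → ℝ) (r : Td d × Td d → ℂ) (U : Set (Td d))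
    (hU : IsOpen U) (hUn : U.Nonempty) (hv : Measurable v) (hr : Measurable r)
    (C R : ℝ) (hC : ∀ p, ‖v p‖ ≤ C) (hR0 : 0 ≤ R)
    (hR : ∀ x : Td d × Td d, x.1 ∈ U ∨ x.2 ∈ U → ‖r x‖ ≤ R)
    (hs : ∀ x : Td d × Td d, r x.swap = r x) :
    ¬ FiniteDimensional ℂ (Wsub v r U) := by
  intro hfin
  have := nsc d hd
  have hUi : U.Infinite := by
    intro hf
    exact (hU.measure_pos volume hUn).ne' (hf.measure_zero volume)
  have : Infinite U := hUi.to_subtype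
  obtain ⟨B, hBi, hBo, hBd⟩ := exists_seq_infinite_isOpen_pairwise_disjoint U
  let A : ℕ → Set (Td d) := fun n => Subtype.val '' B n
  have hAo : ∀ n, IsOpen (A n) := fun n => hU.isOpenMap_subtype_val _ (hBo n)
  have hAn : ∀ n, (A n).Nonempty := fun n => (hBi n).nonempty.image _
  have hAU : ∀ n, A n ⊆ U := by
    rintro n _ ⟨x, _, rfl⟩; exact x.2
  have hAd : Pairwise (Function.onFun Disjoint A) := fun m n hmn =>
    (Set.disjoint_image_iff Subtype.val_injective).2 (hBd hmn)
  have hAm : ∀ n, MeasurableSet (A n) := fun n => (hAo n).measurableSet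
  choose f hfW hf1 using fun n =>
    exists_mem_Wsub v r U (A n) (hAm n) (hAU n) hv hr C R hC hR0 hR hs
  have hli : LinearIndependent ℂ fun n =>
      (indicatorConstLp 2 (hAm n) (measure_ne_top volume (A n)) (1 : ℂ) : L2 d) := by
    refine linearIndependent_of_ne_zero_of_inner_eq_zero (𝕜 := ℂ) ?_ ?_
    · intro n h0
      have h1 := L2.inner_indicatorConstLp_one_indicatorConstLp_one (𝕜 := ℂ) (hAm n) (hAm n)
        (measure_ne_top volume (A n)) (measure_ne_top volume (A n))
      rw [h0, inner_zero_left, inter_self] at h1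
      have h2 : (volume : Measure (Td d)).real (A n) = 0 := RCLike.ofReal_eq_zero.1 h1.symm
      rw [measureReal_eq_zero_iff] at h2
      exact ((hAo n).measure_pos volume (hAn n)).ne' h2
    · intro m n hmn
      have h1 := L2.inner_indicatorConstLp_one_indicatorConstLp_one (𝕜 := ℂ) (hAm m) (hAm n)
        (measure_ne_top volume (A m)) (measure_ne_top volume (A n))
      rw [(hAd hmn).inter_eq, measureReal_empty] at h1
      exact_mod_cast h1
  let F : ℕ → Wsub v r U := fun n => ⟨f n, hfW n⟩
  have hF : LinearIndependent ℂ F := by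
    refine LinearIndependent.of_comp ((P1 d) ∘ₗ (Wsub v r U).subtype) ?_
    convert hli using 1
    funext n
    exact hf1 n
  have : Finite ℕ := hF.finite_of_isNoetherian
  exact not_finite ℕ

set_option maxHeartbeats 1600000 in
lemma main_est
    (w₀ v₀ v₁ : Td d → ℝ) (w₁ : Td d → Td d → ℝ) (w₂ : Td d → Td d → Td d → ℝ)
    (K : Td d) (H : H3 d →L[ℂ] H3 d)
    (hv₁ : Continuous v₁) (hw : Continuous fun x : Td d × Td d => w₂ K x.1 x.2)
    (hH : IsHamiltonian w₀ v₀ v₁ w₁ w₂ K H) (z : ℂ) (U : Set (Td d)) (hU : MeasurableSet U)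
    (ε C R : ℝ) (hε : 0 ≤ ε) (hC : 0 ≤ C) (hR : 0 ≤ R)
    (hC0 : ∀ p, ‖v₀ p‖ ≤ C) (hC1 : ∀ p, ‖v₁ p‖ ≤ C)
    (hne : ∀ x : Td d × Td d, x.1 ∈ U ∨ x.2 ∈ U → (w₂ K x.1 x.2 : ℂ) - z ≠ 0)
    (hRb : ∀ x : Td d × Td d, x.1 ∈ U ∨ x.2 ∈ U → ‖((w₂ K x.1 x.2 : ℂ) - z)⁻¹‖ ≤ R)
    (hΔ : ∀ p ∈ U, ‖Delta v₁ w₁ w₂ K p z‖ ≤ ε)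
    (f : H3 d) (hf : f ∈ Wsub v₁ (fun x => ((w₂ K x.1 x.2 : ℂ) - z)⁻¹) U) :
    ‖H f - z • f‖ ≤ (ε + (C + C ^ 2 * R / 2 * (((volume (univ : Set (Td d))) ^ (1 / 2 : ℝ)).toReal))
      * ((volume U) ^ (1 / 2 : ℝ)).toReal) * ‖f‖ := by
  obtain ⟨f0, f1, f2⟩ := hf
  obtain ⟨H0, H1, H2⟩ := hH f
  have hI : Integrable (p1 f) volume := (Lp.memLp (p1 f)).integrable (by norm_num)
  set I := ∫ p, ‖p1 f p‖ with hIdef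
  have hI0 : 0 ≤ I := integral_nonneg fun _ => norm_nonneg _
  have hcs := cs_bound (p1 f) U hU f1
  have hm : Measurable fun x : Td d × Td d => ((w₂ K x.1 x.2 : ℂ) - z)⁻¹ :=
    ((Complex.measurable_ofReal.comp hw.measurable).sub_const z).inv
  have hvc : Measurable fun p => (v₁ p : ℂ) := Complex.measurable_ofReal.comp hv₁.measurable
  -- component 0
  have c0 : ‖p0 (H f - z • f)‖ ≤ C * I := by
    rw [p0_sub, p0_smul, H0, f0]
    simp only [mul_zero, zero_add, sub_zero]
    rw [← integral_const_mul]
    refine norm_integral_le_of_norm_le (hI.norm.const_mul C) (Eventually.of_forall fun t => ?_)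
    rw [norm_mul]
    have := hC0 t
    gcongr
    simpa using this
  -- component 2
  have c2 : p2 (H f - z • f) = 0 := by
    rw [p2_sub, p2_smul]
    refine Lp.ext ?_
    filter_upwards [Lp.coeFn_sub (p2 (H f)) (z • p2 f), Lp.coeFn_smul z (p2 f), H2, f2,
      ae_fst f1, ae_snd f1, Lp.coeFn_zero ℂ 2 (volume : Measure (Td d × Td d))]
      with x h1 h2 h3 h4 h5 h6 h7
    rw [h7, h1, Pi.sub_apply, h2, h3, Pi.smul_apply, smul_eq_mul, h4, Pi.zero_apply]
    by_cases hx : x.1 ∈ U ∨ x.2 ∈ U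
    · have := hne x hx
      field_simp
      ring
    · push Not at hx
      rw [h5 hx.1, h6 hx.2]
      simp
  -- component 1
  have c1 : ‖p1 (H f - z • f)‖ ≤ ε * ‖p1 f‖ + (C ^ 2 * R / 2 * I) *
      (((volume (univ : Set (Td d))) ^ (1 / 2 : ℝ)).toReal) := by
    refine l2_bound _ _ _ _ hε (by positivity) ?_
    have f2' : ∀ᵐ p : Td d, ∀ᵐ t : Td d, p2 f (p, t) =
      -(((v₁ p : ℂ) * p1 f t + (v₁ t : ℂ) * p1 f p) / 2) * ((w₂ K p t : ℂ) - z)⁻¹ :=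
      Measure.ae_ae_of_ae_prod f2
    rw [p1_sub, p1_smul]
    filter_upwards [Lp.coeFn_sub (p1 (H f)) (z • p1 f), Lp.coeFn_smul z (p1 f), H1, f2', f1]
      with p h1 h2 h3 h4 h5
    rw [h1, Pi.sub_apply, h2, h3, Pi.smul_apply, smul_eq_mul, f0]
    have hmp : Measurable fun t : Td d => ((w₂ K p t : ℂ) - z)⁻¹ :=
      hm.comp measurable_prodMk_left
    -- the compact part
    have hb : ∀ᵐ t : Td d, ‖(v₁ t : ℂ) * ((w₂ K p t : ℂ) - z)⁻¹ * p1 f t‖ ≤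
        C * R * ‖p1 f t‖ := by
      filter_upwards [f1] with t ht
      by_cases htU : t ∈ U
      · rw [norm_mul, norm_mul]
        have a1 : ‖(v₁ t : ℂ)‖ ≤ C := by simpa using hC1 t
        have a2 := hRb (p, t) (Or.inr htU)
        simp only at a2
        gcongr
      · rw [ht htU]; simp
    have hJi : Integrable (fun t => (v₁ t : ℂ) * ((w₂ K p t : ℂ) - z)⁻¹ * p1 f t) volume := by
      refine Integrable.mono' (hI.norm.const_mul (C * R)) ?_ hb
      exact (hvc.mul hmp).aestronglyMeasurable.mul hI.aestronglyMeasurable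
    set J := ∫ t, (v₁ t : ℂ) * ((w₂ K p t : ℂ) - z)⁻¹ * p1 f t with hJ
    have hJb : ‖J‖ ≤ C * R * I := by
      rw [hIdef, ← integral_const_mul]
      exact norm_integral_le_of_norm_le (hI.norm.const_mul (C * R)) hb
    have hint : ∫ t, (v₁ t : ℂ) * p2 f (p, t) =
        ∫ t, (-(p1 f p / 2) * ((v₁ t : ℂ) ^ 2 / ((w₂ K p t : ℂ) - z)) -
          ((v₁ p : ℂ) / 2) * ((v₁ t : ℂ) * ((w₂ K p t : ℂ) - z)⁻¹ * p1 f t)) := by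
      refine integral_congr_ae ?_
      filter_upwards [h4] with t ht
      rw [ht]
      ring
    have hfinal : (v₀ p : ℂ) * 0 + (w₁ K p : ℂ) * p1 f p + ∫ t, (v₁ t : ℂ) * p2 f (p, t) =
        z * p1 f p + (Delta v₁ w₁ w₂ K p z * p1 f p - (v₁ p : ℂ) / 2 * J) ∧
        (p1 f p = 0 ∨ p ∈ U) := by
      by_cases hp : p ∈ U
      · refine ⟨?_, Or.inr hp⟩
        have hDi : Integrable (fun t => (v₁ t : ℂ) ^ 2 / ((w₂ K p t : ℂ) - z)) volume := by
          refine Integrable.of_bound ((hvc.pow_const 2).mul hmp).aestronglyMeasurable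
            (C ^ 2 * R) (Eventually.of_forall fun t => ?_)
          have a1 : ‖(v₁ t : ℂ)‖ ≤ C := by simpa using hC1 t
          have a2 := hRb (p, t) (Or.inl hp)
          simp only at a2
          rw [div_eq_mul_inv, norm_mul, norm_pow]
          gcongr
        rw [hint, integral_sub (hDi.const_mul _) (hJi.const_mul _), integral_const_mul,
          integral_const_mul, Delta]
        ring
      · refine ⟨?_, Or.inl (h5 hp)⟩
        rw [hint, h5 hp]
        simp only [zero_div, neg_zero, zero_mul, zero_sub, mul_zero, add_zero, zero_add]
        rw [integral_neg, integral_const_mul]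
    rw [hfinal.1, add_sub_cancel_left]
    refine (norm_sub_le _ _).trans ?_
    have e1 : ‖Delta v₁ w₁ w₂ K p z * p1 f p‖ ≤ ε * ‖p1 f p‖ := by
      rw [norm_mul]
      rcases hfinal.2 with h | h
      · simp [h]
      · have := hΔ p h
        gcongr
    have e2 : ‖(v₁ p : ℂ) / 2 * J‖ ≤ C ^ 2 * R / 2 * I := by
      rw [norm_mul, norm_div]
      have a1 : ‖(v₁ p : ℂ)‖ ≤ C := by simpa using hC1 p
      have h4 : ‖(2:ℂ)‖ = 2 := by norm_num
      rw [h4]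
      calc ‖(v₁ p : ℂ)‖ / 2 * ‖J‖ ≤ C / 2 * (C * R * I) := by gcongr
        _ = _ := by ring
    linarith
  set T := ((volume (univ : Set (Td d))) ^ (1 / 2 : ℝ)).toReal
  have hT : 0 ≤ T := ENNReal.toReal_nonneg
  set S := ((volume U) ^ (1 / 2 : ℝ)).toReal
  have hS : 0 ≤ S := ENNReal.toReal_nonneg
  have hn := p1_norm_le f
  have hIb : I ≤ ‖f‖ * S := hcs.trans (by gcongr)
  calc ‖H f - z • f‖ ≤ _ := h3_norm_le _
    _ ≤ C * I + (ε * ‖p1 f‖ + (C ^ 2 * R / 2 * I) * T) + 0 := by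
        rw [c2, norm_zero]; gcongr
    _ ≤ C * (‖f‖ * S) + (ε * ‖f‖ + (C ^ 2 * R / 2 * (‖f‖ * S)) * T) + 0 := by gcongr
    _ = _ := by ring

/-- For every `K ∈ T^d`, the two-particle branch `Λ_K ⊆ σ_ess(H(K))`. -/
theorem LamK_subset_essSpec
    (d : ℕ) (hd : 1 ≤ d)
    (w₀ v₀ v₁ : Td d → ℝ) (w₁ : Td d → Td d → ℝ) (w₂ : Td d → Td d → Td d → ℝ)
    (hw₀ : Continuous w₀) (hv₀ : Continuous v₀) (hv₁ : Continuous v₁)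
    (hw₁ : Continuous fun x : Td d × Td d => w₁ x.1 x.2)
    (hw₂ : Continuous fun x : Td d × Td d × Td d => w₂ x.1 x.2.1 x.2.2)
    (hsym : ∀ K p q : Td d, w₂ K p q = w₂ K q p)
    (K : Td d) (H : H3 d →L[ℂ] H3 d)
    (hH : IsHamiltonian w₀ v₀ v₁ w₁ w₂ K H) :
    LamK v₁ w₁ w₂ K ⊆ essSpec H := by
  rintro z ⟨k, hzk, hΔ⟩
  have := nsc d hd
  have hw : Continuous fun x : Td d × Td d => w₂ K x.1 x.2 :=
    hw₂.comp (continuous_const.prodMk continuous_id)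
  have hwc : Continuous fun x : Td d × Td d => (w₂ K x.1 x.2 : ℂ) - z :=
    (Complex.continuous_ofReal.comp hw).sub continuous_const
  -- bound on v₀, v₁
  obtain ⟨C, hC, hC0, hC1⟩ : ∃ C : ℝ, 0 ≤ C ∧ (∀ p, ‖v₀ p‖ ≤ C) ∧ ∀ p, ‖v₁ p‖ ≤ C := by
    obtain ⟨A, hA⟩ := isCompact_univ.exists_bound_of_continuousOn hv₀.continuousOn
    obtain ⟨B, hB⟩ := isCompact_univ.exists_bound_of_continuousOn hv₁.continuousOn
    refine ⟨max A B, ?_, fun p => (hA p (mem_univ _)).trans (le_max_left _ _),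
      fun p => (hB p (mem_univ _)).trans (le_max_right _ _)⟩
    exact ((norm_nonneg _).trans (hA 0 (mem_univ _))).trans (le_max_left _ _)
  -- gap at k
  have hwk : Continuous fun q => w₂ K k q := hw.comp (continuous_const.prodMk continuous_id)
  have hgap : ∀ q, (w₂ K k q : ℂ) - z ≠ 0 := by
    intro q hq
    apply hzk
    have hbd := isCompact_range hwk
    refine ⟨w₂ K k q, ⟨ciInf_le hbd.bddBelow q, le_ciSup hbd.bddAbove q⟩, sub_eq_zero.1 hq⟩
  obtain ⟨δ, hδ, hδk⟩ : ∃ δ : ℝ, 0 < δ ∧ ∀ q, δ < ‖(w₂ K k q : ℂ) - z‖ := by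
    have hc : Continuous fun q => ‖(w₂ K k q : ℂ) - z‖ :=
      ((Complex.continuous_ofReal.comp hwk).sub continuous_const).norm
    obtain ⟨q0, -, hq0⟩ := isCompact_univ.exists_isMinOn (univ_nonempty (α := Td d)) hc.continuousOn
    have hpos : 0 < ‖(w₂ K k q0 : ℂ) - z‖ := norm_pos_iff.2 (hgap q0)
    refine ⟨‖(w₂ K k q0 : ℂ) - z‖ / 2, by positivity, fun q => ?_⟩
    have : ‖(w₂ K k q0 : ℂ) - z‖ ≤ ‖(w₂ K k q : ℂ) - z‖ := hq0 (mem_univ q)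
    linarith
  obtain ⟨u, hu, hku, hub⟩ : ∃ u : Set (Td d), IsOpen u ∧ k ∈ u ∧
      ∀ p ∈ u, ∀ q, δ < ‖(w₂ K p q : ℂ) - z‖ := by
    obtain ⟨u, v, hu, -, hku, hv, huv⟩ := generalized_tube_lemma (isCompact_singleton (x := k))
      (isCompact_univ (X := Td d)) (isOpen_lt continuous_const hwc.norm :
        IsOpen {x : Td d × Td d | δ < ‖(w₂ K x.1 x.2 : ℂ) - z‖}) (by
          rintro ⟨p, q⟩ ⟨hp, -⟩
          obtain rfl : p = k := hp
          exact hδk q)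
    exact ⟨u, hu, hku rfl, fun p hp q => huv (a := (p, q)) ⟨hp, hv (mem_univ q)⟩⟩
  have hinv : ∀ p ∈ u, ∀ q, ‖((w₂ K p q : ℂ) - z)⁻¹‖ ≤ δ⁻¹ := by
    intro p hp q
    rw [norm_inv]
    exact inv_anti₀ hδ (hub p hp q).le
  have hun : u ∈ 𝓝 k := hu.mem_nhds hku
  -- continuity of Δ at k
  have hDc : ContinuousAt (fun p => Delta v₁ w₁ w₂ K p z) k := by
    unfold Delta
    have hw1 : Continuous fun p => w₁ K p := hw₁.comp (continuous_const.prodMk continuous_id)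
    refine ((Complex.continuous_ofReal.comp hw1).continuousAt.sub continuousAt_const).sub
      (continuousAt_const.mul ?_)
    refine continuousAt_of_dominated (bound := fun _ => C ^ 2 * δ⁻¹) ?_ ?_
      (integrable_const _) ?_
    · refine Eventually.of_forall fun p => Measurable.aestronglyMeasurable ?_
      have h1 : Measurable fun q => (w₂ K p q : ℂ) - z :=
        hwc.measurable.comp measurable_prodMk_left
      exact ((Complex.measurable_ofReal.comp hv₁.measurable).pow_const 2).div h1
    · filter_upwards [hun] with p hp
      refine Eventually.of_forall fun t => ?_
      have a1 : ‖(v₁ t : ℂ)‖ ≤ C := by simpa using hC1 t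
      have a2 := hinv p hp t
      rw [div_eq_mul_inv, norm_mul, norm_pow]
      gcongr
    · refine Eventually.of_forall fun t => ?_
      have h1 : Continuous fun p => (w₂ K p t : ℂ) - z :=
        hwc.comp (continuous_id.prodMk continuous_const)
      exact continuousAt_const.div h1.continuousAt (hgap t)
  refine essSpec_of_subspaces H z fun ε hε => ?_
  set T := ((volume (univ : Set (Td d))) ^ (1 / 2 : ℝ)).toReal with hTdef
  have hT : 0 ≤ T := ENNReal.toReal_nonneg
  set M := C + C ^ 2 * δ⁻¹ / 2 * T with hM
  have hM0 : 0 ≤ M := by positivity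
  have hD : ∀ᶠ p in 𝓝 k, ‖Delta v₁ w₁ w₂ K p z‖ < ε / 2 := by
    have h1 := hDc.norm
    refine h1.eventually_lt continuousAt_const ?_
    rw [hΔ, norm_zero]; positivity
  -- small neighbourhoods
  set η := ε / 2 / (M + 1) with hη
  have hη0 : 0 < η := by positivity
  obtain ⟨s, hs, hso, hsv⟩ := (Set.exists_isOpen_lt_of_lt (μ := (volume : Measure (Td d)))
    {k} (ENNReal.ofReal (η ^ 2)) (by rw [measure_singleton]; positivity))
  obtain ⟨U, hUsub, hUo, hkU⟩ := mem_nhds_iff.1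
    (inter_mem (inter_mem hun hD) (hso.mem_nhds (hs rfl)))
  have hUu : ∀ p ∈ U, p ∈ u := fun p hp => (hUsub hp).1.1
  have hS : ((volume U) ^ (1 / 2 : ℝ)).toReal ≤ η := by
    have h1 : volume U ≤ ENNReal.ofReal (η ^ 2) :=
      (measure_mono fun p hp => (hUsub hp).2).trans hsv.le
    have h2 : (volume U) ^ (1 / 2 : ℝ) ≤ (ENNReal.ofReal (η ^ 2)) ^ (1 / 2 : ℝ) :=
      ENNReal.rpow_le_rpow h1 (by norm_num)
    rw [ENNReal.ofReal_rpow_of_nonneg (by positivity) (by norm_num), ← Real.sqrt_eq_rpow,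
      Real.sqrt_sq hη0.le] at h2
    exact ENNReal.toReal_le_of_le_ofReal hη0.le h2
  have hlow : ∀ x : Td d × Td d, x.1 ∈ U ∨ x.2 ∈ U →
      (w₂ K x.1 x.2 : ℂ) - z ≠ 0 ∧ ‖((w₂ K x.1 x.2 : ℂ) - z)⁻¹‖ ≤ δ⁻¹ := by
    rintro ⟨p, q⟩ (h | h)
    · exact ⟨norm_pos_iff.1 (hδ.trans (hub p (hUu p h) q)), hinv p (hUu p h) q⟩
    · simp only
      rw [hsym K p q]
      exact ⟨norm_pos_iff.1 (hδ.trans (hub q (hUu q h) p)), hinv q (hUu q h) p⟩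
  refine ⟨Wsub v₁ (fun x => ((w₂ K x.1 x.2 : ℂ) - z)⁻¹) U, ?_, fun f hf => ?_⟩
  · refine Wsub_inf hd v₁ _ U hUo ⟨k, hkU⟩ hv₁.measurable hwc.measurable.inv C δ⁻¹ hC1
      (by positivity) (fun x hx => (hlow x hx).2) ?_
    rintro ⟨p, q⟩
    simp only [Prod.swap_prod_mk]
    rw [hsym K q p]
  · refine (main_est w₀ v₀ v₁ w₁ w₂ K H hv₁ hw hH z U hUo.measurableSet (ε / 2) C δ⁻¹
      (by positivity) hC (by positivity) hC0 hC1 (fun x hx => (hlow x hx).1)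
      (fun x hx => (hlow x hx).2) (fun p hp => (hUsub hp).1.2.le) f hf).trans ?_
    refine mul_le_mul_of_nonneg_right ?_ (norm_nonneg _)
    have h1 : M * ((volume U) ^ (1 / 2 : ℝ)).toReal ≤ M * η := by gcongr
    have h2 : M * η ≤ ε / 2 := by
      have : (M + 1) * η = ε / 2 := by rw [hη]; field_simp
      nlinarith
    change ε / 2 + M * _ ≤ ε
    linarith
end
end
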